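/- Let d ≥ 2. There exist constants C, A < ∞, depending only on d, with the following property: for any ε > 0 and any Lebesgue measurable sets E, E* ⊆ ℝ^d of positive finite measure satisfying 𝒯(E, E*) ≥ ε |E|^{d/(d+1)} |E*|^{d/(d+1)}, there exists a ball ℬ = ℬ(z̄, e, r, r*) such that the associated pair (B, B*) = (π(ℬ), π*(ℬ)) satisfies 𝒯(E ∩ B, E* ∩ B*) ≥ C^{−1} ε^A 𝒯(E, E*), together with |B| ≤ |E| and |B*| ≤ |E*|. -/

import Mathlib

open MeasureTheory ENNReal
open scoped RealInnerProductSpace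

noncomputable section

/-- `ℝ^{d-1}` -/
abbrev Vec (n : ℕ) : Type := EuclideanSpace ℝ (Fin n)

/-- `ℝ^d = ℝ^{d-1} × ℝ`, a point `x = (x', x_d)` -/
abbrev Pt (n : ℕ) : Type := Vec n × ℝ

/-- The Radon-like transform `Tf(x) = ∫_{ℝ^{d-1}} f(x' - t, x_d - |t|²) dt`. -/
def radonT (n : ℕ) (f : Pt n → ℝ≥0∞) (x : Pt n) : ℝ≥0∞ :=
  ∫⁻ t : Vec n, f (x.1 - t, x.2 - ‖t‖ ^ 2)

/-- The incidence functional `𝒯(E, E*) = ∫_E T(χ_{E*})`. -/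
def incT (n : ℕ) (E Estar : Set (Pt n)) : ℝ≥0∞ :=
  ∫⁻ x in E, radonT n (Estar.indicator 1) x

/-- Admissibility of the parameters of a ball `ℬ(z̄, e, r, r*)`:
the center `z̄ = (x̄, x̄*)` lies on the incidence manifold `ℐ`, `ρ > 0`,
`e` is an orthonormal basis of `ℝ^{d-1}`, and `r_j r*_j = ρ > 0` for all `j`. -/
def IsBallParams (n : ℕ) (zb : Pt n × Pt n) (e : Fin n → Vec n)
    (r rs : Fin n → ℝ) (ρ : ℝ) : Prop :=
  zb.2.2 = zb.1.2 - ‖zb.2.1 - zb.1.1‖ ^ 2 ∧ 0 < ρ ∧ Orthonormal ℝ e ∧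
    (∀ j, 0 < r j) ∧ (∀ j, 0 < rs j) ∧ (∀ j, r j * rs j = ρ)

/-- The ball `ℬ(z̄, e, r, r*)`, a subset of the incidence manifold
`ℐ = {(x,y) : y_d = x_d - |y' - x'|²} ⊆ ℝ^d × ℝ^d`. -/
def ballI (n : ℕ) (zb : Pt n × Pt n) (e : Fin n → Vec n)
    (r rs : Fin n → ℝ) (ρ : ℝ) : Set (Pt n × Pt n) :=
  fun z => z.2.2 = z.1.2 - ‖z.2.1 - z.1.1‖ ^ 2 ∧
    (∀ j, |⟪z.1.1 - zb.1.1, e j⟫| < r j) ∧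
    |z.1.2 - zb.2.2 - ‖z.1.1 - zb.2.1‖ ^ 2| < ρ ∧
    (∀ j, |⟪z.2.1 - zb.2.1, e j⟫| < rs j) ∧
    |z.2.2 - zb.1.2 + ‖z.2.1 - zb.1.1‖ ^ 2| < ρ

/-- slice -/
def sl {n : ℕ} (F : Set (Pt n)) (q : Pt n) : Set (Vec n) :=
  {v | (v, 2 * ⟪q.1, v⟫ - q.2) ∈ F}

/-- incidence functional in linearised coordinates -/
def JJ {n : ℕ} (E F : Set (Pt n)) : ℝ≥0∞ := ∫⁻ h in E, volume (sl F h)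

/-- set of incident pairs -/
def GG {n : ℕ} (E F : Set (Pt n)) : Set (Pt n × Vec n) :=
  {q | q.1 ∈ E ∧ q.2 ∈ sl F q.1}

/-- orthonormal box -/
def box {n : ℕ} (b : OrthonormalBasis (Fin n) ℝ (Vec n)) (s : Fin n → ℝ) : Set (Vec n) :=
  {v | ∀ j, |⟪b j, v⟫| < s j}

theorem measurableSet_sl {n : ℕ} {F : Set (Pt n)} (hF : MeasurableSet F) (q : Pt n) :
    MeasurableSet (sl F q) := by
  unfold sl
  apply hF.preimage
  fun_prop

theorem measurableSet_slG {n : ℕ} {F : Set (Pt n)} (hF : MeasurableSet F) :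
    MeasurableSet {q : Pt n × Vec n | q.2 ∈ sl F q.1} := by
  have : Measurable (fun q : Pt n × Vec n => ((q.2, 2 * ⟪q.1.1, q.2⟫ - q.1.2) : Pt n)) := by
    fun_prop
  exact this hF

theorem measurableSet_GG {n : ℕ} {E F : Set (Pt n)} (hE : MeasurableSet E)
    (hF : MeasurableSet F) : MeasurableSet (GG E F) :=
  (measurable_fst hE).inter (measurableSet_slG hF)

theorem measurable_vol_sl {n : ℕ} {F : Set (Pt n)} (hF : MeasurableSet F) :
    Measurable (fun q : Pt n => volume (sl F q)) :=
  measurable_measure_prodMk_left (measurableSet_slG hF)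

theorem JJ_eq_vol {n : ℕ} {E F : Set (Pt n)} (hE : MeasurableSet E)
    (hF : MeasurableSet F) : JJ E F = volume (GG E F) := by
  rw [JJ, show (volume : Measure (Pt n × Vec n)) = (volume : Measure (Pt n)).prod volume from rfl,
    Measure.prod_apply (measurableSet_GG hE hF),
    ← lintegral_indicator hE]
  refine lintegral_congr fun h => ?_
  by_cases hh : h ∈ E
  · rw [Set.indicator_of_mem hh]
    congr 1
    ext v
    simp [GG, hh]
  · rw [Set.indicator_of_notMem hh]
    symm
    convert measure_empty (μ := (volume : Measure (Vec n)))
    ext v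
    simp [GG, hh]

theorem JJ_mono {n : ℕ} {E F E' F' : Set (Pt n)} (h1 : E ⊆ E') (h2 : F ⊆ F') :
    JJ E F ≤ JJ E' F' := by
  unfold JJ
  calc _ ≤ ∫⁻ h in E, volume (sl F' h) := lintegral_mono fun h => measure_mono fun v hv => h2 hv
    _ ≤ _ := lintegral_mono_set h1

theorem JJ_eq_iter {n : ℕ} {E F : Set (Pt n)} (hE : MeasurableSet E)
    (hF : MeasurableSet F) : JJ E F = ∫⁻ a : Vec n, ∫⁻ v : Vec n, ∫⁻ z : ℝ,
      E.indicator 1 (a, 2 * ⟪a, v⟫ - z) * F.indicator 1 (v, z) := by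
  have m1 : Measurable (E.indicator (1 : Pt n → ℝ≥0∞)) := measurable_one.indicator hE
  have m2 : Measurable (F.indicator (1 : Pt n → ℝ≥0∞)) := measurable_one.indicator hF
  have e1 : JJ E F = ∫⁻ h : Pt n, ∫⁻ v : Vec n, E.indicator 1 h *
      F.indicator 1 (v, 2 * ⟪h.1, v⟫ - h.2) := by
    rw [JJ, ← lintegral_indicator hE]
    refine lintegral_congr fun h => ?_
    rw [lintegral_const_mul _ (by fun_prop)]
    by_cases hh : h ∈ E
    · rw [Set.indicator_of_mem hh, Set.indicator_of_mem hh, Pi.one_apply, one_mul,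
        ← lintegral_indicator_one (measurableSet_sl hF h)]
      rfl
    · simp [hh]
  rw [e1, Measure.volume_eq_prod, lintegral_prod _ (by
    apply Measurable.aemeasurable
    apply Measurable.lintegral_prod_right'
      (f := fun q : Pt n × Vec n => E.indicator 1 q.1 * F.indicator 1 (q.2, 2 * ⟪q.1.1, q.2⟫ - q.1.2))
    fun_prop)]
  refine lintegral_congr fun a => ?_
  rw [lintegral_lintegral_swap (by
    apply Measurable.aemeasurable
    simp only [Function.uncurry_def]
    fun_prop)]
  refine lintegral_congr fun v => ?_
  rw [← lintegral_sub_left_eq_self _ (2 * ⟪a, v⟫)]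
  simp

theorem JJ_symm {n : ℕ} {E F : Set (Pt n)} (hE : MeasurableSet E)
    (hF : MeasurableSet F) : JJ E F = JJ F E := by
  have m1 : Measurable (E.indicator (1 : Pt n → ℝ≥0∞)) := measurable_one.indicator hE
  have m2 : Measurable (F.indicator (1 : Pt n → ℝ≥0∞)) := measurable_one.indicator hF
  rw [JJ_eq_iter hE hF, JJ_eq_iter hF hE, lintegral_lintegral_swap (by
    apply Measurable.aemeasurable
    simp only [Function.uncurry_def]
    apply Measurable.lintegral_prod_right'
      (f := fun q : (Vec n × Vec n) × ℝ => E.indicator 1 (q.1.1, 2 * ⟪q.1.1, q.1.2⟫ - q.2)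
        * F.indicator 1 (q.1.2, q.2))
    fun_prop)]
  refine lintegral_congr fun v => lintegral_congr fun a => ?_
  rw [← lintegral_sub_left_eq_self _ (2 * ⟪a, v⟫)]
  refine lintegral_congr fun z => ?_
  rw [mul_comm, real_inner_comm]
  simp

theorem measurableSet_box {n : ℕ} (b : OrthonormalBasis (Fin n) ℝ (Vec n)) (s : Fin n → ℝ) :
    MeasurableSet (box b s) := by
  have : box b s = ⋂ j, {v | |⟪b j, v⟫| < s j} := by ext; simp [box]
  rw [this]
  refine MeasurableSet.iInter fun j => ?_
  exact measurableSet_lt (by fun_prop) (by fun_prop)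

theorem volume_box {n : ℕ} (b : OrthonormalBasis (Fin n) ℝ (Vec n)) (s : Fin n → ℝ)
    (hs : ∀ j, 0 < s j) : volume (box b s) = ENNReal.ofReal (2 ^ n * ∏ j, s j) := by
  have h1 : box b s = b.repr ⁻¹' ((@WithLp.ofLp 2 (Fin n → ℝ)) ⁻¹'
      (Set.univ.pi fun j => Set.Ioo (- s j) (s j))) := by
    ext v
    simp only [box, Set.mem_ofPred_eq, Set.mem_preimage, Set.mem_pi, Set.mem_univ,
      true_implies, Set.mem_Ioo, abs_lt]
    refine forall_congr' fun j => ?_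
    rw [← OrthonormalBasis.repr_apply_apply]
  have hm : MeasurableSet (Set.univ.pi fun j => Set.Ioo (- s j) (s j)) :=
    MeasurableSet.univ_pi fun j => measurableSet_Ioo
  rw [h1, b.repr.measurePreserving.measure_preimage
    ((PiLp.volume_preserving_ofLp (Fin n)).measurable hm).nullMeasurableSet,
    (PiLp.volume_preserving_ofLp (Fin n)).measure_preimage hm.nullMeasurableSet, volume_pi_pi]
  simp only [Real.volume_Ioo]
  rw [← ENNReal.ofReal_prod_of_nonneg (fun j _ => by linarith [hs j])]
  congr 1
  have : ∀ j, s j - -s j = 2 * s j := fun j => by ring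
  simp_rw [this, Finset.prod_mul_distrib]
  simp

theorem vol_affine_preimage (k m : ℝ) (hm : m ≠ 0) (J : Set ℝ) :
    volume {t : ℝ | k - t * m ∈ J} = ENNReal.ofReal |m|⁻¹ * volume J := by
  have : {t : ℝ | k - t * m ∈ J} = (fun t => (-m) * t) ⁻¹' ((fun x => k + x) ⁻¹' J) := by
    ext t
    simp only [Set.mem_ofPred_eq, Set.mem_preimage]
    ring_nf
  rw [this, Real.volume_preimage_mul_left (neg_ne_zero.mpr hm), measure_preimage_add, abs_inv,
    abs_neg]

theorem slab_bound {n : ℕ} (b : OrthonormalBasis (Fin n) ℝ (Vec n)) (s : Fin n → ℝ)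
    (hs : ∀ j, 0 < s j) (y0 a : Vec n) (c l : ℝ) (hl : 0 < l) (J : Set ℝ)
    (hJ : MeasurableSet J) (j : Fin n) (hj : l ≤ s j * |⟪b j, a⟫|) :
    ENNReal.ofReal l * volume {y : Vec n | y - y0 ∈ box b s ∧ 2 * ⟪a, y⟫ + c ∈ J} ≤
      ENNReal.ofReal (4 ^ n * ∏ j, s j) * volume J := by
  set A : Set (Vec n) := {y : Vec n | y - y0 ∈ box b s ∧ 2 * ⟪a, y⟫ + c ∈ J} with hA
  have mA : MeasurableSet A := by
    apply MeasurableSet.inter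
    · exact (measurableSet_box b s).preimage (by fun_prop : Measurable fun y => y - y0)
    · exact hJ.preimage (by fun_prop : Measurable fun y : Vec n => 2 * ⟪a, y⟫ + c)
  set v : Vec n := s j • b j with hv
  set m : ℝ := 2 * ⟪a, v⟫ with hm
  have hmv : |m| = 2 * (s j * |⟪b j, a⟫|) := by
    rw [hm, hv, inner_smul_right, abs_mul, abs_mul, abs_of_pos (hs j), real_inner_comm]
    norm_num
  have hmpos : 0 < |m| := by rw [hmv]; linarith
  have m1 : Measurable (A.indicator (1 : Vec n → ℝ≥0∞)) := measurable_one.indicator mA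
  set B2 : Set (Vec n) := {y | y - y0 ∈ box b (fun j => 2 * s j)} with hB2
  have mB2 : MeasurableSet B2 :=
    (measurableSet_box b _).preimage (by fun_prop : Measurable fun y => y - y0)
  have volB2 : volume B2 = ENNReal.ofReal (4 ^ n * ∏ j, s j) := by
    have : B2 = (fun y => y - y0) ⁻¹' (box b (fun j => 2 * s j)) := rfl
    simp_rw [sub_eq_add_neg] at this
    rw [this, measure_preimage_add_right, volume_box b _ (fun j => by linarith [hs j])]
    congr 1
    rw [Finset.prod_mul_distrib]
    simp only [Finset.prod_const, Finset.card_univ, Fintype.card_fin]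
    rw [← mul_assoc, ← mul_pow]; norm_num
  have step1 : volume A = ∫⁻ t in Set.Icc (0:ℝ) 1, ∫⁻ y, A.indicator 1 (y - t • v) := by
    have : ∀ t : ℝ, ∫⁻ y, A.indicator (1 : Vec n → ℝ≥0∞) (y - t • v) = volume A := fun t => by
      rw [lintegral_sub_right_eq_self (fun y => A.indicator (1 : Vec n → ℝ≥0∞) y) (t • v),
        lintegral_indicator_one mA]
    simp_rw [this]
    simp
  have step2 : volume A ≤ ∫⁻ y, B2.indicator 1 y * (ENNReal.ofReal |m|⁻¹ * volume J) := by
    rw [step1, lintegral_lintegral_swap (by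
      apply Measurable.aemeasurable
      simp only [Function.uncurry_def]
      fun_prop)]
    refine lintegral_mono fun y => ?_
    by_cases hy : y ∈ B2
    · rw [Set.indicator_of_mem hy, Pi.one_apply, one_mul,
        ← vol_affine_preimage (2 * ⟪a, y⟫ + c) m (abs_pos.mp hmpos) J]
      have mS : MeasurableSet {t : ℝ | 2 * ⟪a, y⟫ + c - t * m ∈ J} :=
        hJ.preimage (by fun_prop : Measurable fun t : ℝ => 2 * ⟪a, y⟫ + c - t * m)
      rw [← lintegral_indicator_one mS]
      refine (setLIntegral_le_lintegral _ _).trans (lintegral_mono fun t => ?_)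
      by_cases ht : y - t • v ∈ A
      · have : t ∈ {t : ℝ | 2 * ⟪a, y⟫ + c - t * m ∈ J} := by
          have h2 := ht.2
          rw [inner_sub_right, inner_smul_right] at h2
          simp only [Set.mem_ofPred_eq, hm]
          convert h2 using 1
          ring
        rw [Set.indicator_of_mem this]
        simp [Set.indicator_of_mem ht]
      · simp [Set.indicator_of_notMem ht]
    · rw [Set.indicator_of_notMem hy, zero_mul]
      simp only [nonpos_iff_eq_zero]
      apply setLIntegral_eq_zero measurableSet_Icc
      intro t ht
      have : y - t • v ∉ A := by
        intro hc
        apply hy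
        intro i
        have h1 := hc.1 i
        have e1 : y - y0 = (y - t • v - y0) + t • v := by abel
        rw [e1, inner_add_right]
        have e2 : |⟪b i, t • v⟫| ≤ s i := by
          rw [hv, inner_smul_right, inner_smul_right]
          by_cases hij : i = j
          · subst hij
            rw [real_inner_self_eq_norm_sq, b.orthonormal.1 i]
            rw [abs_of_nonneg (by have := hs i; have := ht.1; positivity)]
            nlinarith [hs i, ht.1, ht.2]
          · rw [b.orthonormal.2 hij]
            simp [(hs i).le]
        calc _ ≤ |⟪b i, y - t • v - y0⟫| + |⟪b i, t • v⟫| := abs_add_le _ _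
          _ < 2 * s i := by linarith
      simp [this]
  have step3 : volume A ≤ ENNReal.ofReal (4 ^ n * ∏ j, s j) * (ENNReal.ofReal |m|⁻¹ * volume J) := by
    refine step2.trans ?_
    rw [lintegral_mul_const _ (measurable_one.indicator mB2), lintegral_indicator_one mB2, volB2]
  calc _ ≤ ENNReal.ofReal l * (ENNReal.ofReal (4 ^ n * ∏ j, s j) *
        (ENNReal.ofReal |m|⁻¹ * volume J)) := by gcongr
    _ = (ENNReal.ofReal l * ENNReal.ofReal |m|⁻¹) *
        (ENNReal.ofReal (4 ^ n * ∏ j, s j) * volume J) := by ring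
    _ ≤ 1 * (ENNReal.ofReal (4 ^ n * ∏ j, s j) * volume J) := by
        gcongr
        rw [← ENNReal.ofReal_mul hl.le, ENNReal.ofReal_le_one, ← div_eq_mul_inv,
          div_le_one hmpos]
        linarith
    _ = _ := one_mul _

theorem lemB {n : ℕ} (b : OrthonormalBasis (Fin n) ℝ (Vec n)) (s : Fin n → ℝ)
    (hs : ∀ j, 0 < s j) {E : Set (Pt n)} (hE : MeasurableSet E) (h0 : Pt n) (y0 : Vec n)
    (l : ℝ) (hl : 0 < l) :
    ENNReal.ofReal l * ∫⁻ y in {y | y - y0 ∈ box b s},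
      volume {a | a ∈ sl E (y, 2 * ⟪h0.1, y⟫ - h0.2) ∧ a - h0.1 ∉ box b (fun j => l / s j)} ≤
      ENNReal.ofReal (4 ^ n * ∏ j, s j) * volume E := by
  set W : Set (Vec n × Vec n) := {q | q.1 - y0 ∈ box b s ∧
    q.2 ∈ sl E (q.1, 2 * ⟪h0.1, q.1⟫ - h0.2) ∧ q.2 - h0.1 ∉ box b (fun j => l / s j)} with hW
  have mW : MeasurableSet W := by
    apply MeasurableSet.inter
    · exact (measurableSet_box b s).preimage (by fun_prop : Measurable fun q : Vec n × Vec n => q.1 - y0)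
    apply MeasurableSet.inter
    · exact hE.preimage (by fun_prop : Measurable fun q : Vec n × Vec n =>
        ((q.2, 2 * ⟪q.1, q.2⟫ - (2 * ⟪h0.1, q.1⟫ - h0.2)) : Pt n))
    · exact (measurableSet_box b _).compl.preimage
        (by fun_prop : Measurable fun q : Vec n × Vec n => q.2 - h0.1)
  have mB : MeasurableSet {y | y - y0 ∈ box b s} :=
    (measurableSet_box b _).preimage (by fun_prop : Measurable fun y => y - y0)
  have e1 : ∫⁻ y in {y | y - y0 ∈ box b s},
      volume {a | a ∈ sl E (y, 2 * ⟪h0.1, y⟫ - h0.2) ∧ a - h0.1 ∉ box b (fun j => l / s j)}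
      = (volume.prod volume) W := by
    rw [Measure.prod_apply mW, ← lintegral_indicator mB]
    refine lintegral_congr fun y => ?_
    by_cases hy : y - y0 ∈ box b s
    · rw [Set.indicator_of_mem (by exact hy)]
      congr 1
      ext a
      simp [hW, hy]
    · rw [Set.indicator_of_notMem (by exact hy)]
      symm
      convert measure_empty (μ := (volume : Measure (Vec n)))
      ext v
      simp [hW, hy]
  rw [e1, Measure.prod_apply_symm mW, ← lintegral_const_mul _ (measurable_measure_prodMk_right mW)]
  have e2 : volume E = ∫⁻ a, volume (Prod.mk a ⁻¹' E) := by
    rw [Measure.volume_eq_prod, Measure.prod_apply hE]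
  rw [e2, ← lintegral_const_mul _ (measurable_measure_prodMk_left hE)]
  refine lintegral_mono fun a => ?_
  by_cases ha : a - h0.1 ∈ box b (fun j => l / s j)
  · have : (fun x => (x, a)) ⁻¹' W = ∅ := by
      ext y
      simp [hW, ha]
    simp [this]
  · have hx : ∃ j, l ≤ s j * |⟪b j, a - h0.1⟫| := by
      by_contra hcon
      push Not at hcon
      apply ha
      intro j
      rw [lt_div_iff₀ (hs j)]
      linarith [hcon j]
    obtain ⟨j, hj⟩ := hx
    refine le_trans ?_ (slab_bound b s hs y0 (a - h0.1) h0.2 l hl (Prod.mk a ⁻¹' E)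
      (measurable_prodMk_left hE) j hj)
    gcongr
    intro y hy
    refine ⟨hy.1, ?_⟩
    have h2 := hy.2.1
    simp only [sl, Set.mem_ofPred_eq] at h2
    simp only [Set.mem_preimage]
    convert h2 using 2
    rw [inner_sub_left, real_inner_comm a y]
    ring

theorem lintegral_cons {k : ℕ} {V : Type*} [MeasurableSpace V] (μ : Fin (k + 1) → Measure V)
    [∀ i, SigmaFinite (μ i)]
    (g : (Fin (k + 1) → V) → ℝ≥0∞) (hg : Measurable g) :
    ∫⁻ x, g x ∂(Measure.pi μ) =
      ∫⁻ x0, ∫⁻ xs, g (Fin.cons x0 xs) ∂(Measure.pi fun i : Fin k => μ i.succ) ∂(μ 0) := by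
  have h := measurePreserving_piFinSuccAbove μ 0
  have h2 := (h.symm (MeasurableEquiv.piFinSuccAbove (fun _ : Fin (k+1) => V) 0)).lintegral_comp hg
  rw [← h2, lintegral_prod]
  · have : ∀ (x : V) (y : Fin k → V),
        (MeasurableEquiv.piFinSuccAbove (fun _ : Fin (k+1) => V) 0).symm (x, y) = Fin.cons x y := by
      intro x y
      simp [MeasurableEquiv.piFinSuccAbove]
      rfl
    simp only [this, Fin.succAbove_zero]
  · exact (hg.comp (MeasurableEquiv.measurable _)).aemeasurable

theorem lintegral_prod_pi' {V : Type*} [MeasurableSpace V] (μ : Measure V)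
    [SigmaFinite μ] (g : V → ℝ≥0∞) (hg : Measurable g) (k : ℕ) :
    ∫⁻ x, ∏ i, g (x i) ∂(Measure.pi fun _ : Fin k => μ) = (∫⁻ x, g x ∂μ) ^ k := by
  induction k with
  | zero => simp
  | succ k ih =>
    rw [lintegral_cons _ _ (by fun_prop)]
    simp only [Fin.prod_univ_succ, Fin.cons_zero, Fin.cons_succ]
    have : ∀ x0, ∫⁻ xs : Fin k → V, g x0 * ∏ i, g (xs i) ∂(Measure.pi fun _ : Fin k => μ) =
      g x0 * (∫⁻ x, g x ∂μ) ^ k := fun x0 => by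
        rw [lintegral_const_mul _ (by fun_prop), ih]
    simp_rw [this]
    rw [lintegral_mul_const _ hg, pow_succ, mul_comm]

/-- determinant of a tuple of vectors -/
def dt {n : ℕ} (v : Fin n → Vec n) : ℝ := Matrix.det (Matrix.of fun i j => v i j)

theorem measurable_dt {n : ℕ} : Measurable (dt (n := n)) := by
  unfold dt
  have : Continuous fun v : Fin n → Vec n => Matrix.det (Matrix.of fun i j => v i j) := by
    apply Continuous.matrix_det
    refine continuous_matrix fun i j => ?_
    simp only [Matrix.of_apply]
    fun_prop
  exact this.measurable

theorem drury_inner {n : ℕ} {F : Set (Pt n)} (hF : MeasurableSet F) (v : Fin n → Vec n) :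
    ENNReal.ofReal |dt v| * volume {a : Vec n | ∀ i, (v i, 2 * ⟪a, v i⟫) ∈ F} ≤
      ∏ i, volume (Prod.mk (v i) ⁻¹' F) := by
  by_cases h0 : dt v = 0
  · simp [h0]
  set A : Vec n →ₗ[ℝ] Vec n := Matrix.toLpLin 2 2 ((2:ℝ) • Matrix.of fun i j => v i j) with hA
  have hdet : LinearMap.det A = 2 ^ n * dt v := by
    rw [hA, Matrix.toLpLin_eq_toLin, LinearMap.det_toLin, Matrix.det_smul]
    simp [dt]
  have hne : LinearMap.det A ≠ 0 := by rw [hdet]; positivity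
  have hset : {a : Vec n | ∀ i, (v i, 2 * ⟪a, v i⟫) ∈ F} = A ⁻¹'
      ((@WithLp.ofLp 2 (Fin n → ℝ)) ⁻¹' (Set.univ.pi fun i => Prod.mk (v i) ⁻¹' F)) := by
    ext a
    simp only [Set.mem_ofPred_eq, Set.mem_preimage, Set.mem_pi, Set.mem_univ, true_implies]
    refine forall_congr' fun i => ?_
    have : (A a).ofLp i = 2 * ⟪a, v i⟫ := by
      simp [hA, Matrix.toLpLin_apply, Matrix.mulVec, dotProduct, PiLp.inner_apply, Finset.mul_sum, mul_assoc]
    rw [this]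
  have hm : MeasurableSet (Set.univ.pi fun i => Prod.mk (v i) ⁻¹' F) :=
    MeasurableSet.univ_pi fun i => measurable_prodMk_left hF
  rw [hset, Measure.addHaar_preimage_linearMap volume hne,
    (PiLp.volume_preserving_ofLp (Fin n)).measure_preimage hm.nullMeasurableSet, volume_pi_pi,
    ← mul_assoc]
  calc _ ≤ 1 * ∏ i, volume (Prod.mk (v i) ⁻¹' F) := by
        gcongr
        rw [← ENNReal.ofReal_mul (abs_nonneg _), ENNReal.ofReal_le_one, hdet, abs_inv, abs_mul,
          ← div_eq_mul_inv, div_le_one (by positivity)]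
        have : (1:ℝ) ≤ |2 ^ n| := by
          rw [abs_of_pos (by positivity)]; exact one_le_pow₀ (by norm_num)
        nlinarith [abs_nonneg (dt v)]
    _ = _ := one_mul _

theorem drury {n : ℕ} {F : Set (Pt n)} (hF : MeasurableSet F) :
    ∫⁻ a : Vec n, ∫⁻ v : Fin n → Vec n, ENNReal.ofReal |dt v| *
      {v : Fin n → Vec n | ∀ i, (v i, 2 * ⟪a, v i⟫) ∈ F}.indicator 1 v ≤ volume F ^ n := by
  have mW : MeasurableSet {q : Vec n × (Fin n → Vec n) | ∀ i, (q.2 i, 2 * ⟪q.1, q.2 i⟫) ∈ F} := by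
    have : {q : Vec n × (Fin n → Vec n) | ∀ i, (q.2 i, 2 * ⟪q.1, q.2 i⟫) ∈ F} =
      ⋂ i, {q : Vec n × (Fin n → Vec n) | (q.2 i, 2 * ⟪q.1, q.2 i⟫) ∈ F} := by ext; simp
    rw [this]
    refine MeasurableSet.iInter fun i => ?_
    exact hF.preimage (by fun_prop : Measurable fun q : Vec n × (Fin n → Vec n) =>
      ((q.2 i, 2 * ⟪q.1, q.2 i⟫) : Pt n))
  have mi := (measurable_one (α := ℝ≥0∞) (β := Vec n × (Fin n → Vec n))).indicator mW
  have md := measurable_dt (n := n)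
  rw [lintegral_lintegral_swap (by
    apply Measurable.aemeasurable
    simp only [Function.uncurry_def]
    apply Measurable.mul
    · fun_prop
    · exact mi)]
  calc _ ≤ ∫⁻ v : Fin n → Vec n, ∏ i, volume (Prod.mk (v i) ⁻¹' F) := by
        refine lintegral_mono fun v => ?_
        have mS : MeasurableSet {a : Vec n | ∀ i, (v i, 2 * ⟪a, v i⟫) ∈ F} :=
          mW.preimage (measurable_prodMk_right (y := v))
        refine le_trans (le_of_eq ?_) (drury_inner hF v)
        rw [← lintegral_indicator_one mS, ← lintegral_const_mul _ (measurable_one.indicator mS)]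
        rfl
    _ = _ := by
        rw [volume_pi, lintegral_prod_pi' (volume : Measure (Vec n))
          (fun y => volume (Prod.mk y ⁻¹' F)) (measurable_measure_prodMk_left hF),
          Measure.volume_eq_prod, Measure.prod_apply hF]

theorem slab_sub {n : ℕ} (u : Vec n) (hu : ‖u‖ = 1) (τ : ℝ) (hτ : 0 < τ) :
    ∃ L : Vec n →ₗ[ℝ] Vec n, LinearMap.det L = 2 ^ n * τ ∧
      {x : Vec n | x ∈ Metric.ball (0 : Vec n) 1 ∧ |⟪u, x⟫| < τ} ⊆ L '' Metric.ball (0 : Vec n) 1 := by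
  have huu : ⟪u, u⟫ = 1 := by rw [real_inner_self_eq_norm_sq, hu]; norm_num
  refine ⟨(2:ℝ) • LinearMap.transvection (innerₛₗ ℝ u) (-(1-τ) • u), ?_, ?_⟩
  · rw [LinearMap.det_smul, LinearMap.transvection.det]
    simp [hu]
  · rintro x ⟨hx, hx2⟩
    refine ⟨(1/2:ℝ) • (x + ((1/τ - 1) * ⟪u, x⟫) • u), ?_, ?_⟩
    · rw [mem_ball_zero_iff] at hx ⊢
      have e1 : ‖(1/2:ℝ) • (x + ((1/τ - 1) * ⟪u, x⟫) • u)‖^2 < 1 := by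
        rw [norm_smul, mul_pow, ← real_inner_self_eq_norm_sq (x + _), inner_add_left, inner_add_right, inner_add_right, real_inner_smul_left, real_inner_smul_left, real_inner_smul_right, real_inner_smul_right, huu, real_inner_comm u x, real_inner_self_eq_norm_sq]
        have h3 : (⟪u, x⟫ / τ)^2 < 1 := by
          rw [sq_lt_one_iff_abs_lt_one, abs_div, abs_of_pos hτ, div_lt_one hτ]; exact hx2
        have h4 : ‖x‖^2 < 1 := by nlinarith [norm_nonneg x]
        norm_num
        have e2 : ‖x‖ ^ 2 + (τ⁻¹ - 1) * ⟪u, x⟫ * ⟪u, x⟫ + ((τ⁻¹ - 1) * ⟪u, x⟫ * ⟪u, x⟫ + (τ⁻¹ - 1) * ⟪u, x⟫ * ((τ⁻¹ - 1) * ⟪u, x⟫)) = ‖x‖^2 + (⟪u, x⟫ / τ)^2 - ⟪u, x⟫^2 := by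
          field_simp; ring
        rw [e2]
        nlinarith [sq_nonneg ⟪u, x⟫]
      nlinarith [norm_nonneg ((1/2:ℝ) • (x + ((1/τ - 1) * ⟪u, x⟫) • u))]
    · simp only [LinearMap.smul_apply, LinearMap.transvection.apply, innerₛₗ_apply_apply]
      simp only [inner_smul_right, inner_add_right, huu]
      match_scalars <;> field_simp
      ring

/-- normalised optimality -/
def Opt {n : ℕ} (N : ℕ) (μ : Measure (Vec n)) : Prop :=
  ∀ L : Vec n →ₗ[ℝ] Vec n, LinearMap.det L ≠ 0 →
    μ.real (L '' Metric.ball (0 : Vec n) 1) ^ N ≤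
      2 * μ.real (Metric.ball (0 : Vec n) 1) ^ N * |LinearMap.det L|

theorem opt_func {n : ℕ} {N : ℕ} (hN : N ≠ 0) (μ : Measure (Vec n)) [IsFiniteMeasure μ] (hμ : Opt N μ)
    (u : Vec n) (hu : ‖u‖ = 1) :
    ENNReal.ofReal ((1/2) ^ (N + n + 2) * μ.real (Metric.ball (0 : Vec n) 1)) ≤ ∫⁻ x, ‖⟪u, x⟫‖ₑ ∂μ := by
  set τ : ℝ := (1/2) ^ (N+n+1) with hτd
  have hτ : 0 < τ := by positivity
  set B := Metric.ball (0 : Vec n) 1 with hB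
  obtain ⟨L, hL, hsub⟩ := slab_sub u hu τ hτ
  set W := {x : Vec n | x ∈ B ∧ |⟪u, x⟫| < τ} with hW
  have hWm : MeasurableSet {x : Vec n | |⟪u, x⟫| < τ} := by
    apply measurableSet_lt <;> fun_prop
  have h1 := hμ L (by rw [hL]; positivity)
  have h2 : μ.real W ^ N ≤ (μ.real B / 2) ^ N := by
    calc μ.real W ^ N ≤ μ.real (L '' B) ^ N := by
          gcongr
          finiteness
      _ ≤ _ := h1
      _ = (μ.real B / 2) ^ N := by
        rw [hL, abs_of_pos (by positivity), hτd, div_pow, pow_add, pow_add]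
        simp only [div_pow, one_pow, pow_one]
        field_simp
        rw [← hB]; ring
  have h3 : μ.real W ≤ μ.real B / 2 := by
    exact le_of_pow_le_pow_left₀ hN (by positivity) h2
  have h4 : μ.real B ≤ μ.real W + μ.real (B \ {x : Vec n | |⟪u, x⟫| < τ}) := by
    rw [← measureReal_inter_add_sdiff (μ := μ) (s := B) hWm]
    rfl
  have h5 : μ.real B / 2 ≤ μ.real (B \ {x : Vec n | |⟪u, x⟫| < τ}) := by linarith
  calc ENNReal.ofReal ((1/2) ^ (N + n + 2) * μ.real B) = ENNReal.ofReal τ * ENNReal.ofReal (μ.real B / 2) := by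
        rw [← ENNReal.ofReal_mul hτ.le]
        congr 1
        rw [hτd]; ring
    _ ≤ ENNReal.ofReal τ * μ (B \ {x : Vec n | |⟪u, x⟫| < τ}) := by
        gcongr
        rw [← ofReal_measureReal]
        exact ENNReal.ofReal_le_ofReal h5
    _ ≤ ENNReal.ofReal τ * μ {x | ENNReal.ofReal τ ≤ ‖⟪u, x⟫‖ₑ} := by
        gcongr
        rintro x ⟨-, hx⟩
        simp only [Set.mem_ofPred_eq, not_lt] at hx ⊢
        rw [Real.enorm_eq_ofReal_abs]
        exact ENNReal.ofReal_le_ofReal hx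
    _ ≤ _ := mul_meas_ge_le_lintegral (by fun_prop) _

theorem opt_clm {n : ℕ} {N : ℕ} (hN : N ≠ 0) (μ : Measure (Vec n)) [IsFiniteMeasure μ] (hμ : Opt N μ)
    {W : Type*} [NormedAddCommGroup W] [NormedSpace ℝ W] (Φ : Vec n →L[ℝ] W) :
    ENNReal.ofReal ((1/2) ^ (N + n + 3) * μ.real (Metric.ball (0 : Vec n) 1)) * ‖Φ‖ₑ ≤
      ∫⁻ x, ‖Φ x‖ₑ ∂μ := by
  by_cases h0 : Φ = 0
  · have : ‖Φ‖ₑ = 0 := by rw [h0, ← ofReal_norm]; simp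
    simp [this]
  have hpos : 0 < ‖Φ‖ := norm_pos_iff.mpr h0
  obtain ⟨x, hx1, hx2⟩ := ContinuousLinearMap.exists_lt_apply_of_lt_opNorm Φ (r := ‖Φ‖/2) (by linarith)
  obtain ⟨g, hg1, hg2⟩ := exists_dual_vector'' ℝ (Φ x)
  set l : StrongDual ℝ (Vec n) := g.comp Φ
  set w := (InnerProductSpace.toDual ℝ (Vec n)).symm l with hw
  have hl : ∀ y, l y = ⟪w, y⟫ := fun y => by
    rw [hw]; exact (InnerProductSpace.toDual_symm_apply).symm
  have hwn : ‖Φ‖ / 2 ≤ ‖w‖ := by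
    have : ‖Φ x‖ = ⟪w, x⟫ := by rw [← hl]; simp [l, hg2]
    have h2 := real_inner_le_norm w x
    have := norm_nonneg w
    nlinarith
  have hwp : 0 < ‖w‖ := by linarith
  have h1 := opt_func hN μ hμ (‖w‖⁻¹ • w) (by rw [norm_smul]; simp [hwp.ne'])
  calc _ = ENNReal.ofReal ((‖Φ‖ / 2) * ((1/2) ^ (N + n + 2) * μ.real (Metric.ball (0 : Vec n) 1))) := by
        rw [← ofReal_norm, ← ENNReal.ofReal_mul (by positivity)]
        congr 1; ring
    _ ≤ ENNReal.ofReal ‖w‖ * ENNReal.ofReal ((1/2) ^ (N + n + 2) * μ.real (Metric.ball (0 : Vec n) 1)) := by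
        rw [← ENNReal.ofReal_mul (by positivity)]
        gcongr
    _ ≤ ENNReal.ofReal ‖w‖ * ∫⁻ x, ‖⟪‖w‖⁻¹ • w, x⟫‖ₑ ∂μ := by gcongr
    _ = ∫⁻ x, ENNReal.ofReal ‖w‖ * ‖⟪‖w‖⁻¹ • w, x⟫‖ₑ ∂μ := by
        rw [lintegral_const_mul]; fun_prop
    _ ≤ _ := by
        apply lintegral_mono
        intro y
        simp only
        rw [← ofReal_norm, ← ofReal_norm, ← ENNReal.ofReal_mul (by positivity), real_inner_smul_left, ← hl]
        apply ENNReal.ofReal_le_ofReal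
        rw [norm_mul, norm_inv, norm_norm, mul_inv_cancel_left₀ hwp.ne']
        calc ‖l y‖ = ‖g (Φ y)‖ := rfl
          _ ≤ ‖g‖ * ‖Φ y‖ := g.le_opNorm _
          _ ≤ 1 * ‖Φ y‖ := by gcongr
          _ = _ := one_mul _

theorem opt_multi {n : ℕ} {N : ℕ} (hN : N ≠ 0) (μ : Measure (Vec n)) [IsFiniteMeasure μ] (hμ : Opt N μ)
    (k : ℕ) (L : ContinuousMultilinearMap ℝ (fun _ : Fin k => Vec n) ℝ) :
    ENNReal.ofReal ((1/2) ^ (N + n + 3) * μ.real (Metric.ball (0 : Vec n) 1)) ^ k * ‖L‖ₑ ≤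
      ∫⁻ x, ‖L x‖ₑ ∂(Measure.pi fun _ : Fin k => μ) := by
  induction k with
  | zero =>
    have : ∀ x, ‖L x‖ₑ = ‖L‖ₑ := fun x => by
      rw [← ofReal_norm, ← ofReal_norm, ContinuousMultilinearMap.fin0_apply_norm]
    simp [this]
  | succ k ih =>
    have hm : Measurable fun x => ‖L x‖ₑ := by
      have := L.cont; exact (this.enorm).measurable
    rw [lintegral_cons (fun _ => μ) _ hm]
    have e : ∀ x0 xs, L (Fin.cons x0 xs) = L.curryLeft x0 xs := fun _ _ => rfl
    simp only [e]
    calc _ = ENNReal.ofReal ((1/2) ^ (N + n + 3) * μ.real (Metric.ball (0 : Vec n) 1)) ^ k *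
          (ENNReal.ofReal ((1/2) ^ (N + n + 3) * μ.real (Metric.ball (0 : Vec n) 1)) * ‖L.curryLeft‖ₑ) := by
          have : ‖L.curryLeft‖ₑ = ‖L‖ₑ := by
            rw [← ofReal_norm, ← ofReal_norm, ContinuousMultilinearMap.curryLeft_norm]
          rw [this]; ring
      _ ≤ ENNReal.ofReal ((1/2) ^ (N + n + 3) * μ.real (Metric.ball (0 : Vec n) 1)) ^ k *
          ∫⁻ x, ‖L.curryLeft x‖ₑ ∂μ := by
          gcongr
          exact opt_clm hN μ hμ _
      _ = ∫⁻ x, ENNReal.ofReal ((1/2) ^ (N + n + 3) * μ.real (Metric.ball (0 : Vec n) 1)) ^ k * ‖L.curryLeft x‖ₑ ∂μ := by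
          rw [lintegral_const_mul]
          exact (L.curryLeft.continuous.enorm).measurable
      _ ≤ _ := lintegral_mono fun x0 => ih _

theorem continuous_dt {n : ℕ} : Continuous (dt (n := n)) := by
  unfold dt
  apply Continuous.matrix_det
  fun_prop

theorem dt_eq {n : ℕ} (v : Fin n → Vec n) :
    dt v = (EuclideanSpace.basisFun (Fin n) ℝ).toBasis.det v := by
  rw [Module.Basis.det_apply, ← Matrix.det_transpose, dt]
  congr 1

theorem dt_comp {n : ℕ} (A : Vec n →ₗ[ℝ] Vec n) (v : Fin n → Vec n) :
    dt (fun i => A (v i)) = LinearMap.det A * dt v := by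
  rw [dt_eq, dt_eq]
  exact Module.Basis.det_comp _ A v

def dtL (n : ℕ) : ContinuousMultilinearMap ℝ (fun _ : Fin n => Vec n) ℝ :=
  { (EuclideanSpace.basisFun (Fin n) ℝ).toBasis.det.toMultilinearMap with
    cont := by
      have : (fun v : Fin n → Vec n => (EuclideanSpace.basisFun (Fin n) ℝ).toBasis.det v) = dt := by
        ext v; rw [dt_eq]
      show Continuous (fun v : Fin n → Vec n => (EuclideanSpace.basisFun (Fin n) ℝ).toBasis.det v)
      rw [this]; exact continuous_dt }

theorem dtL_apply {n : ℕ} (v : Fin n → Vec n) : dtL n v = dt v := by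
  rw [dt_eq]; rfl

theorem dt_inj (k : ℕ) : ∃ c0 : ℝ, 0 < c0 ∧ ∀ x, c0 * ‖x‖ ≤ ‖(dtL (k+1)).curryLeft x‖ := by
  have hinj : LinearMap.ker (dtL (k+1)).curryLeft.toLinearMap = ⊥ := by
    rw [LinearMap.ker_eq_bot']
    intro x hx
    by_contra hne
    set b := (EuclideanSpace.basisFun (Fin (k+1)) ℝ).toBasis
    obtain ⟨e, he⟩ := SeparatingDual.exists_continuousLinearEquiv_apply_eq (R := ℝ) (b.ne_zero 0) hne
    have h1 : dt (fun i => (e : Vec (k+1) →ₗ[ℝ] Vec (k+1)) (b i)) ≠ 0 := by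
      rw [dt_comp, dt_eq]
      have : b.det (fun i => b i) = 1 := b.det_self
      rw [this, mul_one]
      exact e.toLinearEquiv.isUnit_det'.ne_zero
    apply h1
    have h2 : (fun i => (e : Vec (k+1) →ₗ[ℝ] Vec (k+1)) (b i)) = Fin.cons x (fun i => e (b i.succ)) := by
      funext i
      refine Fin.cases ?_ (fun i => ?_) i
      · simpa using he
      · simp
    rw [h2, ← dtL_apply]
    have : (dtL (k+1)).curryLeft x = 0 := hx
    show (dtL (k+1)).curryLeft x _ = 0
    rw [this]; rfl
  obtain ⟨K, hK, hA⟩ := LinearMap.exists_antilipschitzWith (dtL (k+1)).curryLeft.toLinearMap hinj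
  refine ⟨(K:ℝ)⁻¹, by positivity, fun x => ?_⟩
  have := hA.le_mul_dist x 0
  simp only [dist_zero_right, map_zero] at this
  rw [inv_mul_le_iff₀ (by positivity)]
  exact this

theorem dt_lower (k : ℕ) : ∃ c0 : ℝ, 0 < c0 ∧ ∀ (N : ℕ) (_ : N ≠ 0) (μ : Measure (Vec (k+1))),
    IsFiniteMeasure μ → Opt N μ →
    ENNReal.ofReal ((1/2) ^ (N + (k+1) + 3) * μ.real (Metric.ball (0 : Vec (k+1)) 1)) ^ k *
      (ENNReal.ofReal c0 * ∫⁻ x, ‖x‖ₑ ∂μ) ≤ ∫⁻ v, ‖dt v‖ₑ ∂(Measure.pi fun _ => μ) := by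
  obtain ⟨c0, hc0, h⟩ := dt_inj k
  refine ⟨c0, hc0, fun N hN μ _ hμ => ?_⟩
  have hm : Measurable fun v : Fin (k+1) → Vec (k+1) => ‖dt v‖ₑ := continuous_dt.enorm.measurable
  rw [lintegral_cons (fun _ => μ) _ hm, ← lintegral_const_mul _ (by fun_prop), ← lintegral_const_mul _ (by fun_prop)]
  apply lintegral_mono
  intro x
  refine le_trans ?_ (le_trans (opt_multi hN μ hμ k ((dtL (k+1)).curryLeft x)) (le_of_eq ?_))
  · beta_reduce
    refine mul_le_mul_right ?_ _
    rw [← ofReal_norm, ← ofReal_norm, ← ENNReal.ofReal_mul hc0.le]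
    exact ENNReal.ofReal_le_ofReal (h x)
  · refine lintegral_congr fun xs => ?_
    rw [← dtL_apply]; rfl

theorem svd_box {n : ℕ} (M : Vec n →ₗ[ℝ] Vec n) (hM : LinearMap.det M ≠ 0) :
    ∃ (b : OrthonormalBasis (Fin n) ℝ (Vec n)) (σ : Fin n → ℝ), (∀ j, 0 < σ j) ∧
      ∏ j, σ j = |LinearMap.det M| ∧ M '' Metric.ball (0 : Vec n) 1 ⊆ box b σ := by
  set T := M ∘ₗ M.adjoint with hT
  have hs : T.IsSymmetric := LinearMap.isSymmetric_self_comp_adjoint M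
  have hfr : Module.finrank ℝ (Vec n) = n := by simp
  set b := hs.eigenvectorBasis hfr
  have hdadj : LinearMap.det M.adjoint = LinearMap.det M := by
    rw [← LinearMap.det_toMatrix (EuclideanSpace.basisFun (Fin n) ℝ).toBasis, LinearMap.toMatrix_adjoint, Matrix.det_conjTranspose, LinearMap.det_toMatrix]; simp
  have hev : ∀ j, hs.eigenvalues hfr j = ‖M.adjoint (b j)‖ ^ 2 := fun j => by
    have h1 : T (b j) = hs.eigenvalues hfr j • b j := by
      exact hs.apply_eigenvectorBasis hfr j
    rw [← real_inner_self_eq_norm_sq, LinearMap.adjoint_inner_left]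
    have : M (M.adjoint (b j)) = T (b j) := rfl
    rw [this, h1, inner_smul_right, real_inner_self_eq_norm_sq, b.norm_eq_one]; norm_num
  have hdT : (∏ j, ‖M.adjoint (b j)‖) ^ 2 = |LinearMap.det M| ^ 2 := by
    have h1 := hs.det_eq_prod_eigenvalues hfr
    rw [← Finset.prod_pow, sq_abs]
    simp only [hev] at h1
    rw [hT, LinearMap.det_comp, hdadj] at h1
    simp at h1
    rw [← h1]; ring
  have hd : ∏ j, ‖M.adjoint (b j)‖ = |LinearMap.det M| := by
    rwa [sq_eq_sq₀ (Finset.prod_nonneg fun _ _ => norm_nonneg _) (abs_nonneg _)] at hdT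
  have hpos : ∀ j, 0 < ‖M.adjoint (b j)‖ := fun j => by
    rcases (norm_nonneg (M.adjoint (b j))).eq_or_lt with h | h
    · exfalso
      have : ∏ j, ‖M.adjoint (b j)‖ = 0 := Finset.prod_eq_zero (Finset.mem_univ j) h.symm
      rw [this] at hd
      exact hM (abs_eq_zero.mp hd.symm)
    · exact h
  refine ⟨b, fun j => ‖M.adjoint (b j)‖, hpos, hd, ?_⟩
  rintro _ ⟨x, hx, rfl⟩ j
  rw [mem_ball_zero_iff] at hx
  rw [← LinearMap.adjoint_inner_left]
  calc _ ≤ ‖M.adjoint (b j)‖ * ‖x‖ := abs_real_inner_le_norm _ _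
    _ < _ := by have := hpos j; nlinarith

theorem map_real {n : ℕ} {S : Set (Vec n)} (hS : MeasurableSet S) (e : Vec n ≃L[ℝ] Vec n) (X : Set (Vec n)) :
      (Measure.map e.symm (volume.restrict S)).real X = volume.real (S ∩ e '' X) := by
  have := e.symm.toHomeomorph.toMeasurableEquiv.map_apply (μ := volume.restrict S) X
  rw [Measure.restrict_apply' hS] at this
  rw [measureReal_def, measureReal_def]
  congr 1
  rw [Set.inter_comm, e.image_eq_preimage_symm]
  exact this

theorem opt_exists {n : ℕ} {N : ℕ} (hN : N ≠ 0) {S : Set (Vec n)} (hS : MeasurableSet S) (hS0 : 0 < volume S)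
    (hSf : volume S < ⊤) :
    ∃ e : Vec n ≃L[ℝ] Vec n, 0 < volume.real (S ∩ e '' Metric.ball (0 : Vec n) 1) ∧
      Opt N (Measure.map e.symm (volume.restrict S)) := by
  set B := Metric.ball (0 : Vec n) 1 with hB
  set D : (Vec n ≃L[ℝ] Vec n) → ℝ := fun e => |LinearMap.det (e : Vec n →ₗ[ℝ] Vec n)| with hD
  have hDpos : ∀ e, 0 < D e := fun e => abs_pos.mpr e.toLinearEquiv.isUnit_det'.ne_zero
  set g : (Vec n ≃L[ℝ] Vec n) → ℝ := fun e => volume.real (S ∩ e '' B) with hg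
  set p : (Vec n ≃L[ℝ] Vec n) → ℝ := fun e => g e ^ N / D e with hp
  have hg1 : ∀ e, g e ≤ volume.real S := fun e => measureReal_mono Set.inter_subset_left hSf.ne
  have hvolI : ∀ e : Vec n ≃L[ℝ] Vec n, volume (e '' B) = ENNReal.ofReal (D e) * volume B := fun e =>
    Measure.addHaar_image_linearMap volume (e : Vec n →ₗ[ℝ] Vec n) B
  have hBf : volume B ≠ ⊤ := measure_ball_lt_top.ne
  have hg2 : ∀ e, g e ≤ D e * volume.real B := fun e => by
    calc g e ≤ volume.real (e '' B) := measureReal_mono Set.inter_subset_right (by rw [hvolI]; finiteness)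
      _ = _ := by
        rw [measureReal_def, hvolI, ENNReal.toReal_mul, ENNReal.toReal_ofReal (hDpos e).le]; rfl
  have hg0 : ∀ e, 0 ≤ g e := fun e => measureReal_nonneg
  obtain ⟨m, rfl⟩ := Nat.exists_eq_succ_of_ne_zero hN
  have hbdd : BddAbove (Set.range p) := by
    refine ⟨volume.real S ^ m * volume.real B, ?_⟩
    rintro _ ⟨e, rfl⟩
    simp only [hp]
    rw [div_le_iff₀ (hDpos e)]
    calc g e ^ (m+1) = g e ^ m * g e := pow_succ _ _
      _ ≤ volume.real S ^ m * (D e * volume.real B) := by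
        gcongr
        · exact hg1 e
        · exact hg2 e
      _ = _ := by ring
  -- some e with positive mass
  obtain ⟨e0, he0⟩ : ∃ e0, 0 < g e0 := by
    by_contra hcon
    push Not at hcon
    have hU : S = ⋃ k : ℕ, S ∩ Metric.ball 0 ((k:ℝ)+1) := by
      rw [← Set.inter_iUnion]
      refine (Set.inter_eq_left.mpr fun x _ => ?_).symm
      obtain ⟨k, hk⟩ := exists_nat_gt ‖x‖
      exact Set.mem_iUnion.mpr ⟨k, by rw [mem_ball_zero_iff]; linarith⟩
    have : volume S = 0 := by
      rw [hU, measure_iUnion_null_iff]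
      intro k
      set e := ContinuousLinearEquiv.smulLeft (R₁ := ℝ) (M₁ := Vec n) (Units.mk0 ((k:ℝ)+1) (by positivity)) with he
      have h1 := le_antisymm (hcon e) (hg0 e)
      have h2 : volume (S ∩ e '' B) = 0 := by
        change (volume (S ∩ e '' B)).toReal = 0 at h1
        rw [ENNReal.toReal_eq_zero_iff] at h1
        rcases h1 with h1 | h1
        · exact h1
        · exact absurd h1 (measure_lt_top_mono Set.inter_subset_left hSf).ne
      refine measure_mono_null ?_ h2
      rintro x ⟨hx1, hx2⟩
      refine ⟨hx1, ((k:ℝ)+1)⁻¹ • x, ?_, ?_⟩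
      · rw [mem_ball_zero_iff] at hx2
        rw [hB, mem_ball_zero_iff, norm_smul, norm_inv, Real.norm_of_nonneg (by positivity), inv_mul_lt_iff₀ (by positivity)]
        linarith
      · rw [he]
        show ((k:ℝ)+1) • ((k:ℝ)+1)⁻¹ • x = x
        rw [smul_smul, mul_inv_cancel₀ (by positivity), one_smul]
    exact hS0.ne' this
  have hp0 : 0 < p e0 := div_pos (pow_pos he0 _) (hDpos _)
  have hsup : 0 < sSup (Set.range p) := lt_of_lt_of_le hp0 (le_csSup hbdd ⟨e0, rfl⟩)
  obtain ⟨_, ⟨e, rfl⟩, he⟩ := exists_lt_of_lt_csSup (Set.range_nonempty_iff_nonempty.mpr ⟨e0⟩) (half_lt_self hsup)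
  have hpe : 0 < p e := by linarith
  have hge : 0 < g e := by
    rcases (hg0 e).eq_or_lt with h | h
    · simp [hp, ← h] at hpe
    · exact h
  refine ⟨e, hge, ?_⟩
  intro L hL
  rw [map_real hS, map_real hS]
  set e' := (L.equivOfDetNeZero hL).toContinuousLinearEquiv.trans e with he'
  have h1 : p e' ≤ 2 * p e := by
    have := le_csSup hbdd ⟨e', rfl⟩
    linarith
  have h2 : e '' (L '' B) = e' '' B := by
    rw [Set.image_image]; rfl
  have h3 : D e' = D e * |LinearMap.det L| := by
    rw [hD]
    simp only
    rw [← abs_mul, ← LinearMap.det_comp]; rfl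
  rw [h2]
  simp only [hp] at h1
  rw [h3, div_le_iff₀ (mul_pos (hDpos e) (abs_pos.mpr hL))] at h1
  calc _ ≤ _ := h1
    _ = _ := by
      have := (hDpos e).ne'
      field_simp
      rfl

theorem box_arith {k : ℕ} {f g D Fv c0 c1 w : ℝ} (hf : 0 < f) (hg : 0 < g) (hD : 0 < D) 
    (hc0 : 0 < c0) (hc1 : 0 < c1) (hw : 0 < w)
    (hB : (f/2)^((k+1)^2+1) ≤ 2 * g^((k+1)^2+1) * (2*Fv/(D*c0*(c1*g)^k*f))^(k+1)) (hgD : g ≤ D*w) :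
    f^((k+1)^2+(k+1)+1) ≤ (2^((k+1)^2+2) * 2^(k+1) * w^(k+1) / (c0*c1^k)^(k+1)) * g * Fv^(k+1) := by
  set N := (k+1)^2+1 with hN
  have h1 : f^N ≤ 2^(N+1) * g^N * (2*Fv/(D*c0*(c1*g)^k*f))^(k+1) := by
    rw [div_pow, div_le_iff₀ (by positivity)] at hB
    calc _ ≤ _ := hB
      _ = _ := by ring
  have h2 : f^N * (D*c0*(c1*g)^k*f)^(k+1) ≤ 2^(N+1)*g^N*(2*Fv)^(k+1) := by
    rw [div_pow, ← mul_div_assoc, le_div_iff₀ (by positivity)] at h1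
    exact h1
  have h3 : g^(k+1) ≤ (D*w)^(k+1) := pow_le_pow_left₀ hg.le hgD _
  have h4 : f^((k+1)^2+(k+1)+1) * (c0*c1^k)^(k+1) * g^((k+1)^2) ≤
      (2^(N+1) * 2^(k+1) * w^(k+1) * g * Fv^(k+1)) * g^((k+1)^2) := by
    calc _ = (f^N * (c0*(c1*g)^k*f)^(k+1)) * g^(k+1) := by rw [hN]; ring
      _ ≤ (f^N * (c0*(c1*g)^k*f)^(k+1)) * (D*w)^(k+1) := by gcongr
      _ = (f^N * (D*c0*(c1*g)^k*f)^(k+1)) * w^(k+1) := by ring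
      _ ≤ (2^(N+1)*g^N*(2*Fv)^(k+1)) * w^(k+1) := by gcongr
      _ = _ := by rw [hN]; ring
  have h5 := le_of_mul_le_mul_right h4 (by positivity)
  calc _ ≤ (2^(N+1) * 2^(k+1) * w^(k+1) * g * Fv^(k+1)) / (c0*c1^k)^(k+1) := by
        rw [le_div_iff₀ (by positivity)]; exact h5
    _ = _ := by rw [hN]; ring

theorem box_lemma (k : ℕ) : ∃ C : ℝ, 0 < C ∧ ∀ (S : Set (Vec (k+1))) (f Fv : ℝ), MeasurableSet S → 0 < f →
    volume S = ENNReal.ofReal f →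
    ∫⁻ v, ENNReal.ofReal |dt v| ∂(Measure.pi fun _ : Fin (k+1) => volume.restrict S) ≤ ENNReal.ofReal Fv →
    ∃ (b : OrthonormalBasis (Fin (k+1)) ℝ (Vec (k+1))) (σ : Fin (k+1) → ℝ) (g : ℝ),
      (∀ j, 0 < σ j) ∧ 0 < g ∧ ENNReal.ofReal g ≤ volume (S ∩ box b σ) ∧
      f^((k+1)^2+(k+1)+1) ≤ C * g * Fv^(k+1) ∧ g^(k+1) * ∏ j, σ j ≤ C * Fv := by
  obtain ⟨c0, hc0, hdl⟩ := dt_lower k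
  set N := (k+1)^2+1 with hNd
  have hN : N ≠ 0 := by omega
  set B := Metric.ball (0 : Vec (k+1)) 1 with hBd
  set w := volume.real B with hw
  have hBf : volume B ≠ ⊤ := measure_ball_lt_top.ne
  have hwp : 0 < w := ENNReal.toReal_pos (Metric.measure_ball_pos _ _ one_pos).ne' hBf
  set c1 : ℝ := (1/2)^(N+(k+1)+3) with hc1d
  have hc1 : 0 < c1 := by positivity
  set C1 := (2^((k+1)^2+2) * 2^(k+1) * w^(k+1) / (c0*c1^k)^(k+1)) with hC1
  set C2 := 1 / (c1^(k+1)*c0) with hC2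
  refine ⟨C1 + C2, by positivity, ?_⟩
  intro S f Fv hS hf hSf hintg
  obtain ⟨e, hg, hopt⟩ := opt_exists hN hS (by rw [hSf]; simpa using hf) (by rw [hSf]; finiteness)
  set μ := Measure.map e.symm (volume.restrict S) with hμ
  have : IsFiniteMeasure (volume.restrict S) := ⟨by rw [Measure.restrict_apply_univ, hSf]; finiteness⟩
  have hfin : IsFiniteMeasure μ := by rw [hμ]; infer_instance
  set g := volume.real (S ∩ e '' B) with hgd
  have hμB : μ.real B = g := map_real hS e B
  set M : Vec (k+1) →ₗ[ℝ] Vec (k+1) := (e : Vec (k+1) →ₗ[ℝ] Vec (k+1)) with hM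
  have hdet : LinearMap.det M ≠ 0 := e.toLinearEquiv.isUnit_det'.ne_zero
  set D := |LinearMap.det M| with hD
  have hDp : 0 < D := abs_pos.mpr hdet
  -- integral change
  have hI : ∫⁻ v, ‖dt v‖ₑ ∂(Measure.pi fun _ : Fin (k+1) => μ) ≤ ENNReal.ofReal (Fv / D) := by
    have h1 : (Measure.pi fun _ : Fin (k+1) => μ) = (Measure.pi fun _ : Fin (k+1) => volume.restrict S).map
        (fun x i => e.symm (x i)) := by
      rw [hμ]
      exact (Measure.pi_map_pi (fun i => e.symm.continuous.measurable.aemeasurable)).symm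
    rw [h1, lintegral_map continuous_dt.enorm.measurable (by
      refine measurable_pi_lambda _ fun i => e.symm.continuous.measurable.comp (measurable_pi_apply i))]
    have h2 : ∀ v : Fin (k+1) → Vec (k+1), ENNReal.ofReal |dt v| = ENNReal.ofReal D * ‖dt (fun i => e.symm (v i))‖ₑ := fun v => by
      have := dt_comp M (fun i => e.symm (v i))
      have h3 : (fun i => M (e.symm (v i))) = v := by funext i; exact e.apply_symm_apply _
      rw [h3] at this
      rw [this, abs_mul, ENNReal.ofReal_mul (abs_nonneg _), ← Real.enorm_eq_ofReal_abs (dt _)]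
    simp_rw [h2] at hintg
    rw [lintegral_const_mul] at hintg
    · rw [ENNReal.ofReal_div_of_pos hDp, ENNReal.le_div_iff_mul_le (by left; simpa using hDp) (by left; finiteness), mul_comm]
      exact hintg
    · exact continuous_dt.enorm.measurable.comp
        (measurable_pi_lambda _ fun i => e.symm.continuous.measurable.comp (measurable_pi_apply i))
  have hlow := (hdl N hN μ hfin hopt).trans hI
  rw [hμB] at hlow
  -- (a)
  have ha0 : ENNReal.ofReal (c1 * g) ≤ ∫⁻ x, ‖x‖ₑ ∂μ := by
    have h1 := opt_clm hN μ hopt (ContinuousLinearMap.id ℝ (Vec (k+1)))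
    have h2 : ‖ContinuousLinearMap.id ℝ (Vec (k+1))‖ₑ = 1 := by
      rw [← ofReal_norm, ContinuousLinearMap.norm_id]; simp
    rw [h2, mul_one, hμB] at h1
    exact h1
  have ha : (c1*g)^(k+1) * c0 * D ≤ Fv := by
    have h1 : ENNReal.ofReal ((c1*g)^k * (c0 * (c1*g))) ≤ ENNReal.ofReal (Fv / D) := by
      refine le_trans ?_ hlow
      rw [ENNReal.ofReal_mul (by positivity), ENNReal.ofReal_mul hc0.le, ENNReal.ofReal_pow (by positivity)]
      gcongr
    have h2 : 0 < (c1*g)^k * (c0 * (c1*g)) := by positivity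
    rw [ENNReal.ofReal_le_ofReal_iff'] at h1
    rcases h1 with h1 | h1
    · rw [le_div_iff₀ hDp] at h1
      calc _ = (c1*g)^k * (c0 * (c1*g)) * D := by ring
        _ ≤ _ := h1
    · linarith
  have hFv : 0 < Fv := lt_of_lt_of_le (by positivity) ha
  -- (b)
  set R := 2*Fv/(D*c0*(c1*g)^k*f) with hR
  have hRp : 0 < R := by positivity
  have hμuniv : μ.real Set.univ = f := by
    rw [hμ, map_real hS, Set.image_univ_of_surjective e.surjective, Set.inter_univ, measureReal_def, hSf, ENNReal.toReal_ofReal hf.le]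
  have hball : f / 2 ≤ μ.real (Metric.ball 0 R) := by
    have h1 : ENNReal.ofReal R * μ (Metric.ball 0 R)ᶜ ≤ ∫⁻ x, ‖x‖ₑ ∂μ := by
      refine le_trans ?_ (mul_meas_ge_le_lintegral (by fun_prop) (ENNReal.ofReal R))
      gcongr
      intro x hx
      simp only [Set.mem_compl_iff, mem_ball_zero_iff, not_lt] at hx
      rw [Set.mem_ofPred_eq, ← ofReal_norm]
      exact ENNReal.ofReal_le_ofReal hx
    have h2 : ENNReal.ofReal (((c1*g)^k * c0) * (R * μ.real (Metric.ball 0 R)ᶜ)) ≤ ENNReal.ofReal (Fv / D) := by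
      refine le_trans ?_ hlow
      rw [ENNReal.ofReal_mul (by positivity), ENNReal.ofReal_mul (by positivity), ENNReal.ofReal_pow (by positivity), mul_assoc]
      gcongr
      rw [ENNReal.ofReal_mul hRp.le, ofReal_measureReal]
      exact h1
    rw [ENNReal.ofReal_le_ofReal_iff (by positivity), le_div_iff₀ hDp] at h2
    have h3 : R * (D*c0*(c1*g)^k*f) = 2*Fv := by rw [hR]; field_simp
    have h4 : μ.real (Metric.ball 0 R)ᶜ ≤ f / 2 := by
      have h5 : (R * (D*c0*(c1*g)^k)) * μ.real (Metric.ball 0 R)ᶜ ≤ (R * (D*c0*(c1*g)^k)) * (f/2) := by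
        nlinarith
      exact le_of_mul_le_mul_left h5 (by positivity)
    have h6 := measureReal_add_measureReal_compl (μ := μ) (measurableSet_ball (x := (0 : Vec (k+1))) (ε := R))
    rw [hμuniv] at h6
    linarith
  have hopt2 := hopt (R • LinearMap.id) (by rw [LinearMap.det_smul]; simp; positivity)
  rw [LinearMap.det_smul, LinearMap.det_id, mul_one, finrank_euclideanSpace_fin, abs_of_pos (by positivity), hμB] at hopt2
  have himg : Metric.ball (0 : Vec (k+1)) R ⊆ (R • LinearMap.id : Vec (k+1) →ₗ[ℝ] Vec (k+1)) '' Metric.ball 0 1 := by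
    intro x hx
    rw [mem_ball_zero_iff] at hx
    refine ⟨R⁻¹ • x, ?_, ?_⟩
    · rw [mem_ball_zero_iff, norm_smul, norm_inv, Real.norm_of_nonneg hRp.le, inv_mul_lt_iff₀ hRp]; linarith
    · simp [smul_smul, hRp.ne']
  have hb : (f/2)^N ≤ 2 * g^N * R^(k+1) := by
    refine le_trans ?_ hopt2
    apply pow_le_pow_left₀ (by positivity)
    exact hball.trans (measureReal_mono himg (by finiteness))
  have hgD : g ≤ D * w := by
    have hv : volume (e '' B) = ENNReal.ofReal D * volume B := Measure.addHaar_image_linearMap volume M B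
    calc g ≤ volume.real (e '' B) := measureReal_mono Set.inter_subset_right (by rw [hv]; finiteness)
      _ = _ := by rw [measureReal_def, hv, ENNReal.toReal_mul, ENNReal.toReal_ofReal hDp.le]; rfl
  have hfinal := box_arith hf hg hDp hc0 hc1 hwp hb hgD
  obtain ⟨b, σ, hσ, hσD, hsub⟩ := svd_box M hdet
  refine ⟨b, σ, g, hσ, hg, ?_, ?_, ?_⟩
  · rw [hgd, ofReal_measureReal (by
      refine (measure_lt_top_mono Set.inter_subset_left ?_).ne
      rw [hSf]; finiteness)]
    gcongr
    exact hsub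
  · refine hfinal.trans ?_
    have : 0 < C2 * g * Fv^(k+1) := by positivity
    rw [add_mul, add_mul]; linarith
  · rw [hσD]
    have h1 : g^(k+1) * D ≤ C2 * Fv := by
      rw [hC2, one_div_mul_eq_div, le_div_iff₀ (by positivity)]
      calc _ = (c1*g)^(k+1) * c0 * D := by ring
        _ ≤ _ := ha
    have : 0 < C1 * Fv := by positivity
    rw [add_mul]; linarith

theorem arith1 {n : ℕ} (hn : n ≠ 0) {α δ C Fv fS g D : ℝ} (hα : 0 < α) (hδ : 0 < δ) (hC : 0 < C) (hFv : 0 < Fv)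
    (hfS : α / 16 ≤ fS) (hg : 0 < g) (hgf : g ≤ fS) (h1 : δ * Fv ≤ 32 * α^(n+1))
    (h2 : fS^(n^2+n+1) ≤ C * g * Fv^n) (h3 : g^n * D ≤ C * Fv) :
    δ ≤ 1 + C*32^n*16^(n^2+n+1) + (C*32^n*16^(n^2+n+1))^n*C*32 ∧
    δ^n*α ≤ (1 + C*32^n*16^(n^2+n+1) + (C*32^n*16^(n^2+n+1))^n*C*32) * g ∧
    δ^(n^2+1)*D ≤ (1 + C*32^n*16^(n^2+n+1) + (C*32^n*16^(n^2+n+1))^n*C*32) * α := by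
  set K := C*32^n*16^(n^2+n+1) with hK
  have hKp : 0 < K := by positivity
  have hf0 : 0 < fS := by linarith
  have hα16 : α ≤ 16 * fS := by linarith
  have hpw : (δ*Fv)^n ≤ (32*α^(n+1))^n := pow_le_pow_left₀ (by positivity) h1 n
  have s1 : δ^n * α ≤ K * g := by
    have : (δ^n * α) * α^(n^2+n) ≤ (K * g) * α^(n^2+n) := by
      calc (δ^n * α) * α^(n^2+n) = δ^n * α^(n^2+n+1) := by ring
        _ ≤ δ^n * (16*fS)^(n^2+n+1) := by gcongr
        _ = δ^n * 16^(n^2+n+1) * fS^(n^2+n+1) := by ring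
        _ ≤ δ^n * 16^(n^2+n+1) * (C * g * Fv^n) := by gcongr
        _ = 16^(n^2+n+1) * C * g * (δ*Fv)^n := by ring
        _ ≤ 16^(n^2+n+1) * C * g * (32*α^(n+1))^n := by gcongr
        _ = _ := by rw [hK]; ring
    exact le_of_mul_le_mul_right this (by positivity)
  have s2 : δ^n ≤ K := by
    have h4 : fS^(n^2+n) ≤ C * Fv^n := by
      have : fS^(n^2+n) * fS ≤ (C * Fv^n) * fS := by
        calc _ = fS^(n^2+n+1) := by ring
          _ ≤ C * g * Fv^n := h2
          _ ≤ C * fS * Fv^n := by gcongr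
          _ = _ := by ring
      exact le_of_mul_le_mul_right this hf0
    have : δ^n * α^(n^2+n) ≤ K * α^(n^2+n) := by
      calc δ^n * α^(n^2+n) ≤ δ^n * (16*fS)^(n^2+n) := by gcongr
        _ = δ^n * 16^(n^2+n) * fS^(n^2+n) := by ring
        _ ≤ δ^n * 16^(n^2+n) * (C * Fv^n) := by gcongr
        _ = 16^(n^2+n) * C * (δ*Fv)^n := by ring
        _ ≤ 16^(n^2+n+1) * C * (32*α^(n+1))^n := by
            have h16 : (16:ℝ)^(n^2+n) ≤ 16^(n^2+n+1) := pow_le_pow_right₀ (by norm_num) (by omega)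
            refine mul_le_mul (mul_le_mul_of_nonneg_right h16 hC.le) hpw (by positivity) (by positivity)
        _ = _ := by rw [hK]; ring
    exact le_of_mul_le_mul_right this (by positivity)
  have s3 : δ^(n^2+1)*D ≤ (K^n*C*32) * α := by
    have h5 : (δ^n*α)^n ≤ (K*g)^n := pow_le_pow_left₀ (by positivity) s1 n
    rcases le_or_gt D 0 with hD | hD
    · have : δ^(n^2+1)*D ≤ 0 := mul_nonpos_of_nonneg_of_nonpos (by positivity) hD
      have : 0 < (K^n*C*32) * α := by positivity
      linarith
    have : (δ^(n^2+1)*D) * α^n ≤ ((K^n*C*32) * α) * α^n := by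
      calc (δ^(n^2+1)*D) * α^n = (δ^n*α)^n * D * δ := by ring
        _ ≤ (K*g)^n * D * δ := by gcongr
        _ = K^n * (g^n*D) * δ := by ring
        _ ≤ K^n * (C*Fv) * δ := by gcongr
        _ = K^n * C * (δ*Fv) := by ring
        _ ≤ K^n * C * (32*α^(n+1)) := by gcongr
        _ = _ := by ring
    exact le_of_mul_le_mul_right this (by positivity)
  have hX : 0 < K^n*C*32 := by positivity
  refine ⟨?_, ?_, ?_⟩
  · rcases le_or_gt δ 1 with h | h
    · linarith
    · have := le_self_pow₀ h.le hn
      linarith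
  · nlinarith
  · nlinarith

def Ri {n : ℕ} (E F : Set (Pt n)) (c : ℝ) : Set (Pt n) := {h | h ∈ E ∧ ENNReal.ofReal c ≤ volume (sl F h)}

theorem measurableSet_Ri {n : ℕ} {E F : Set (Pt n)} (hE : MeasurableSet E) (hF : MeasurableSet F) (c : ℝ) :
    MeasurableSet (Ri E F c) :=
  hE.inter (measurableSet_le measurable_const (measurable_vol_sl hF))

theorem Ri_sub {n : ℕ} {E F : Set (Pt n)} {c : ℝ} : Ri E F c ⊆ E := fun _ h => h.1

theorem Ri_mass {n : ℕ} {E F : Set (Pt n)} (hE : MeasurableSet E) (hF : MeasurableSet F) {c e T : ℝ}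
    (hc : 0 ≤ c) (he0 : 0 ≤ e) (he : volume E ≤ ENNReal.ofReal e) (h : ENNReal.ofReal T ≤ JJ E F) :
    ENNReal.ofReal (T - c * e) ≤ JJ (Ri E F c) F := by
  have hsplit : JJ E F = JJ (Ri E F c) F + ∫⁻ h in E \ Ri E F c, volume (sl F h) := by
    unfold JJ
    rw [← lintegral_inter_add_sdiff _ E (measurableSet_Ri hE hF c), Set.inter_eq_right.mpr Ri_sub]
  have hbad : ∫⁻ h in E \ Ri E F c, volume (sl F h) ≤ ENNReal.ofReal (c * e) := by
    calc _ ≤ ∫⁻ h in E \ Ri E F c, ENNReal.ofReal c := by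
          apply setLIntegral_mono' (hE.diff (measurableSet_Ri hE hF c))
          rintro h ⟨h1, h2⟩
          by_contra hcon
          exact h2 ⟨h1, le_of_not_ge hcon⟩
      _ = ENNReal.ofReal c * volume (E \ Ri E F c) := by simp
      _ ≤ ENNReal.ofReal c * ENNReal.ofReal e := by
          gcongr
          exact (measure_mono Set.sdiff_subset).trans he
      _ = _ := by rw [ENNReal.ofReal_mul hc]
  rw [ENNReal.ofReal_sub _ (by positivity), tsub_le_iff_right]
  refine h.trans ?_
  rw [hsplit]; gcongr

theorem pi_restrict_le {n : ℕ} {S : Set (Vec n)} (hS : MeasurableSet S) {S' : Set (Vec n)} (h : S ⊆ S') :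
    ∫⁻ v, ENNReal.ofReal |dt v| ∂(Measure.pi fun _ : Fin n => volume.restrict S) ≤
    ∫⁻ v : Fin n → Vec n, ENNReal.ofReal |dt v| * {v : Fin n → Vec n | ∀ i, v i ∈ S'}.indicator 1 v := by
  rw [← Measure.restrict_pi_pi, ← lintegral_indicator (MeasurableSet.univ_pi fun _ => hS)]
  apply lintegral_mono
  intro v
  beta_reduce
  by_cases hv : v ∈ Set.univ.pi fun _ : Fin n => S
  · rw [Set.indicator_of_mem hv, Set.indicator_of_mem (show v ∈ {v : Fin n → Vec n | ∀ i, v i ∈ S'} from fun i => h (hv i trivial))]; simp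
  · rw [Set.indicator_of_notMem hv]; exact zero_le

/-- core of Stage 1: pick a good hyperplane point. -/
theorem stage1_pick {n : ℕ} {E2 F1 : Set (Pt n)} (hE2 : MeasurableSet E2) (hF1 : MeasurableSet F1)
    {β f : ℝ} (hβ : 0 < β) (hf : 0 < f) (hF : volume F1 ≤ ENNReal.ofReal f) (p0 : Pt n)
    (hp : ENNReal.ofReal (β/16) ≤ volume (sl E2 p0)) :
    ∃ a0 ∈ sl E2 p0, 
      ∫⁻ v : Fin n → Vec n, ENNReal.ofReal |dt v| * {v : Fin n → Vec n | ∀ i, v i ∈ {u | u + p0.1 ∈ sl F1 (a0, 2*⟪p0.1, a0⟫ - p0.2)}}.indicator 1 v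
        ≤ ENNReal.ofReal (32 * f^n / β) := by
  set Ft : Set (Pt n) := (fun q : Pt n => q + p0) ⁻¹' F1 with hFt
  have hFtm : MeasurableSet Ft := (measurable_add_const p0) hF1
  have hFtv : volume Ft ≤ ENNReal.ofReal f := by
    have : (volume : Measure (Pt n)).IsAddRightInvariant := by
      rw [Measure.volume_eq_prod]; infer_instance
    rw [hFt, measure_preimage_add_right]; exact hF
  have key : ∀ a : Vec n, {v : Fin n → Vec n | ∀ i, v i ∈ {u | u + p0.1 ∈ sl F1 (a, 2*⟪p0.1, a⟫ - p0.2)}} =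
      {v : Fin n → Vec n | ∀ i, (v i, 2 * ⟪a, v i⟫) ∈ Ft} := fun a => by
    ext v
    simp only [Set.mem_ofPred_eq, sl, hFt, Set.mem_preimage]
    refine forall_congr' fun i => ?_
    have : 2 * ⟪a, v i + p0.1⟫ - (2*⟪p0.1, a⟫ - p0.2) = 2 * ⟪a, v i⟫ + p0.2 := by
      rw [inner_add_right, real_inner_comm p0.1 a]; ring
    rw [this]; rfl
  simp only [key]
  by_contra hcon
  push Not at hcon
  have h1 := drury hFtm
  have h2 : ENNReal.ofReal (32 * f^n/β) * volume (sl E2 p0) ≤ volume Ft ^ n := by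
    refine le_trans ?_ h1
    refine le_trans ?_ (setLIntegral_le_lintegral (sl E2 p0) _)
    rw [← setLIntegral_const]
    exact setLIntegral_mono' (measurableSet_sl hE2 p0) fun a ha => (hcon a ha).le
  have h3 : ENNReal.ofReal (2 * f^n) ≤ ENNReal.ofReal (f^n) := by
    calc _ = ENNReal.ofReal (32 * f^n/β) * ENNReal.ofReal (β/16) := by
          rw [← ENNReal.ofReal_mul (by positivity)]; congr 1; field_simp; ring
      _ ≤ ENNReal.ofReal (32 * f^n/β) * volume (sl E2 p0) := by gcongr
      _ ≤ _ := h2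
      _ ≤ ENNReal.ofReal f ^ n := by gcongr
      _ = _ := (ENNReal.ofReal_pow hf.le n).symm
  rw [ENNReal.ofReal_le_ofReal_iff (by positivity)] at h3
  have : 0 < f^n := by positivity
  linarith

theorem stage1 (k : ℕ) : ∃ C1 : ℝ, 1 ≤ C1 ∧ ∀ (E F : Set (Pt (k+1))) (e f t δ : ℝ), MeasurableSet E → MeasurableSet F →
    0 < e → 0 < f → 0 < t → 0 < δ → volume E = ENNReal.ofReal e → volume F = ENNReal.ofReal f →
    JJ E F = ENNReal.ofReal t → δ * (e*f)^(k+1+1) ≤ t^(k+1+2) →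
    δ ≤ C1 ∧ ∃ (b : OrthonormalBasis (Fin (k+1)) ℝ (Vec (k+1))) (σ : Fin (k+1) → ℝ) (h0 : Pt (k+1)) (y0 : Vec (k+1))
      (S : Set (Vec (k+1))) (s : ℝ), (∀ j, 0 < σ j) ∧ MeasurableSet S ∧ 0 < s ∧ volume S = ENNReal.ofReal s ∧
      (∀ y ∈ S, y - y0 ∈ box b σ) ∧
      (∀ y ∈ S, ENNReal.ofReal (t/f/4) ≤ volume (sl (Ri E F (t/e/2)) (y, 2*⟪h0.1, y⟫ - h0.2))) ∧
      δ^(k+1)*(t/e) ≤ C1 * s ∧ δ^((k+1)^2+1) * ∏ j, σ j ≤ C1 * (t/e) := by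
  obtain ⟨C, hC, hbox⟩ := box_lemma k
  set n := k+1 with hn
  set K := C*32^n*16^(n^2+n+1) with hK
  refine ⟨1 + K + K^n*C*32, by have : 0 < K := by positivity
                               have : 0 < K^n*C*32 := by positivity
                               linarith, ?_⟩
  intro E F e f t δ hE hF he hf ht hδ hEv hFv hJ hyp
  set α := t/e with hα
  set β := t/f with hβ
  have hαp : 0 < α := by positivity
  have hβp : 0 < β := by positivity
  have hαe : α * e = t := by rw [hα]; field_simp
  have hβf : β * f = t := by rw [hβ]; field_simp
  set E1 := Ri E F (α/2) with hE1
  have mE1 : MeasurableSet E1 := measurableSet_Ri hE hF _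
  set F1 := Ri F E1 (β/4) with hF1
  have mF1 : MeasurableSet F1 := measurableSet_Ri hF mE1 _
  set E2 := Ri E1 F1 (α/8) with hE2
  have mE2 : MeasurableSet E2 := measurableSet_Ri mE1 mF1 _
  have m1 : ENNReal.ofReal (t/2) ≤ JJ E1 F := by
    have := Ri_mass hE hF (c := α/2) (T := t) (by positivity) he.le hEv.le hJ.ge
    have e1 : t - α/2*e = t/2 := by linarith
    rwa [e1] at this
  have m2 : ENNReal.ofReal (t/4) ≤ JJ F1 E1 := by
    rw [JJ_symm mE1 hF] at m1
    have := Ri_mass hF mE1 (c := β/4) (by positivity) hf.le hFv.le m1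
    have e1 : t/2 - β/4*f = t/4 := by linarith
    rwa [e1] at this
  have m3 : ENNReal.ofReal (t/8) ≤ JJ E2 F1 := by
    rw [JJ_symm mF1 mE1] at m2
    have := Ri_mass mE1 mF1 (c := α/8) (by positivity) he.le ((measure_mono Ri_sub).trans hEv.le) m2
    have e1 : t/4 - α/8*e = t/8 := by linarith
    rwa [e1] at this
  have hF1v : volume F1 ≤ ENNReal.ofReal f := (measure_mono Ri_sub).trans hFv.le
  obtain ⟨p0, hp0, hp0v⟩ : ∃ p0 ∈ F1, ENNReal.ofReal (β/16) ≤ volume (sl E2 p0) := by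
    by_contra hcon
    push Not at hcon
    rw [JJ_symm mE2 mF1] at m3
    have : ENNReal.ofReal (t/8) ≤ ENNReal.ofReal (t/16) := by
      calc _ ≤ _ := m3
        _ ≤ ∫⁻ p in F1, ENNReal.ofReal (β/16) := setLIntegral_mono' mF1 fun p hp => (hcon p hp).le
        _ = ENNReal.ofReal (β/16) * volume F1 := by simp
        _ ≤ ENNReal.ofReal (β/16) * ENNReal.ofReal f := by gcongr
        _ = _ := by rw [← ENNReal.ofReal_mul (by positivity)]; congr 1; linarith
    rw [ENNReal.ofReal_le_ofReal_iff (by positivity)] at this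
    linarith
  obtain ⟨a0, ha0, hI⟩ := stage1_pick mE2 mF1 hβp hf hF1v p0 hp0v
  set h0 : Pt n := (a0, 2*⟪p0.1, a0⟫ - p0.2) with hh0
  have hh0E : h0 ∈ E2 := ha0
  set Sa := {u : Vec n | u + p0.1 ∈ sl F1 h0} with hSa
  have mSa : MeasurableSet Sa := (measurable_add_const p0.1) (measurableSet_sl mF1 h0)
  have hSav : ENNReal.ofReal (α/8) ≤ volume Sa := by
    have : volume Sa = volume (sl F1 h0) := measure_preimage_add_right volume p0.1 (sl F1 h0)
    rw [this]; exact hh0E.2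
  obtain ⟨S, mS, hSs, hS1, hS2⟩ : ∃ S, MeasurableSet S ∧ S ⊆ Sa ∧ ENNReal.ofReal (α/16) < volume S ∧ volume S < ⊤ := by
    obtain ⟨S, h1, h2, h3, h4⟩ := Measure.exists_subset_measure_lt_top mSa (r := ENNReal.ofReal (α/16)) (lt_of_lt_of_le (by
      rw [ENNReal.ofReal_lt_ofReal_iff (by positivity)]; linarith) hSav)
    exact ⟨S, h1, h2, h3, h4⟩
  set fS := volume.real S with hfS
  have hSfS : volume S = ENNReal.ofReal fS := (ofReal_measureReal hS2.ne).symm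
  have hfS16 : α/16 ≤ fS := by
    rw [hSfS] at hS1
    exact (ENNReal.ofReal_lt_ofReal_iff'.mp hS1).1.le
  obtain ⟨b, σ, g, hσ, hg, hgv, hb1, hb2⟩ := hbox S fS (32*f^n/β) mS (by linarith) hSfS
    ((pi_restrict_le mS hSs).trans hI)
  set y0 := p0.1 with hy0
  set S' := {y : Vec n | y - y0 ∈ S ∩ box b σ} with hS'
  have mS' : MeasurableSet S' := (measurable_sub_const y0) (mS.inter (measurableSet_box b σ))
  have hS'v : volume S' = volume (S ∩ box b σ) := by
    have : S' = (fun y => y + (-y0)) ⁻¹' (S ∩ box b σ) := by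
      ext y; simp [hS', sub_eq_add_neg]
    rw [this, measure_preimage_add_right]
  have hS'fin : volume (S ∩ box b σ) < ⊤ := measure_lt_top_mono Set.inter_subset_left hS2
  have hgs : g ≤ volume.real S' := by
    rw [measureReal_def, hS'v]
    exact (ENNReal.ofReal_le_iff_le_toReal hS'fin.ne).mp hgv
  have hgf : g ≤ fS := by
    refine hgs.trans ?_
    rw [measureReal_def, hS'v]
    exact ENNReal.toReal_mono hS2.ne (measure_mono Set.inter_subset_left)
  have hFvb : δ * (32*f^n/β) ≤ 32 * α^(n+1) := by
    rw [hβ, hα]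
    have : δ * (32*f^n/(t/f)) = 32 * (δ * (e*f)^(n+1)) / (t * e^(n+1)) := by
      rw [mul_pow]; field_simp; ring
    rw [this, div_le_iff₀ (by positivity)]
    calc 32 * (δ * (e*f)^(n+1)) ≤ 32 * t^(n+2) := by gcongr
      _ = _ := by rw [div_pow]; field_simp; ring
  obtain ⟨r1, r2, r3⟩ := arith1 (n := n) (by omega) hαp hδ hC (by positivity) hfS16 hg hgf hFvb hb1 hb2
  refine ⟨r1, b, σ, h0, y0, S', volume.real S', hσ, mS', by linarith, ?_, fun y hy => hy.2, ?_, ?_, r3⟩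
  · rw [ofReal_measureReal (by rw [hS'v]; exact hS'fin.ne)]
  · intro y hy
    have h1 : y - y0 ∈ Sa := hSs hy.1
    have h2 : y ∈ sl F1 h0 := by simpa [hSa] using h1
    exact h2.2
  · refine r2.trans ?_
    gcongr

theorem pigeon {Q ι : Type*} [MeasurableSpace Q] [Fintype ι] (μ : Measure Q) (G : Set Q) (X : Q → ι → ℝ) {R κ : ℝ}
    (hκ : 0 < κ) (hR : 0 ≤ R) (hX : ∀ q ∈ G, ∀ i, |X q i| ≤ R) :
    ∃ G' ⊆ G, μ G ≤ ENNReal.ofReal ((2*R/κ+3) ^ Fintype.card ι) * μ G' ∧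
      ∀ q ∈ G', ∀ q' ∈ G', ∀ i, |X q i - X q' i| < κ := by
  classical
  set m : ℤ := ⌈R/κ⌉ with hm
  have hm0 : 0 ≤ m := Int.ceil_nonneg (by positivity)
  set cells : Finset (ι → ℤ) := Fintype.piFinset fun _ => Finset.Icc (-m) m with hc
  set cell : (ι → ℤ) → Set Q := fun c => {q | q ∈ G ∧ ∀ i, ⌊X q i / κ⌋ = c i} with hcell
  have hcov : G ⊆ ⋃ c ∈ cells, cell c := by
    intro q hq
    simp only [Set.mem_iUnion]
    refine ⟨fun i => ⌊X q i / κ⌋, ?_, hq, fun i => rfl⟩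
    rw [hc, Fintype.mem_piFinset]
    intro i
    have h1 := abs_le.mp (hX q hq i)
    have h2 : R/κ ≤ m := Int.le_ceil _
    rw [Finset.mem_Icc]
    constructor
    · rw [Int.le_floor]
      push_cast
      have : -(R/κ) ≤ X q i / κ := by rw [← neg_div]; gcongr; exact h1.1
      linarith
    · have : X q i / κ ≤ R/κ := by gcongr; exact h1.2
      have h3 : (⌊X q i / κ⌋ : ℝ) ≤ m := (Int.floor_le _).trans (this.trans h2)
      exact_mod_cast h3
  have hcard : (cells.card : ℝ) ≤ (2*R/κ+3) ^ Fintype.card ι := by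
    rw [hc, Fintype.card_piFinset]
    simp only [Int.card_Icc, Finset.prod_const, Finset.card_univ]
    push_cast
    have : ((m + 1 - -m).toNat : ℝ) ≤ 2*R/κ+3 := by
      have h1 : ((m + 1 - -m).toNat : ℤ) = 2*m+1 := by omega
      have h2 : ((m + 1 - -m).toNat : ℝ) = 2*m+1 := by exact_mod_cast h1
      have h3 : (m:ℝ) < R/κ + 1 := Int.ceil_lt_add_one _
      have h4 : 2*R/κ = 2*(R/κ) := by ring
      rw [h2, h4]; linarith
    gcongr
  have hne : cells.Nonempty := ⟨fun _ => 0, by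
    rw [hc, Fintype.mem_piFinset]; intro i; rw [Finset.mem_Icc]; omega⟩
  obtain ⟨c, hcm, hcmax⟩ := Finset.exists_max_image cells (fun c => μ (cell c)) hne
  refine ⟨cell c, fun q hq => hq.1, ?_, ?_⟩
  · calc μ G ≤ μ (⋃ c ∈ cells, cell c) := measure_mono hcov
      _ ≤ ∑ c ∈ cells, μ (cell c) := measure_biUnion_finset_le _ _
      _ ≤ ∑ c' ∈ cells, μ (cell c) := Finset.sum_le_sum fun c' hc' => hcmax c' hc'
      _ = ENNReal.ofReal (cells.card : ℝ) * μ (cell c) := by simp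
      _ ≤ _ := by gcongr
  · intro q hq q' hq' i
    have h1 : ⌊X q i / κ⌋ = ⌊X q' i / κ⌋ := by rw [hq.2 i, hq'.2 i]
    have h2 := Int.abs_sub_lt_one_of_floor_eq_floor h1
    rw [← sub_div, abs_div, abs_of_pos hκ, div_lt_one hκ] at h2
    exact h2

theorem markov_good {n : ℕ} {S : Set (Vec n)} {φ : Vec n → ℝ≥0∞} (hφ : Measurable φ) {s m c : ℝ}
    (hc : 0 < c) (hm : 0 ≤ m) (hs : ENNReal.ofReal s ≤ volume S) (hI : ∫⁻ y in S, φ y ≤ ENNReal.ofReal m) :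
    ENNReal.ofReal (s - m/c) ≤ volume {y | y ∈ S ∧ φ y < ENNReal.ofReal c} := by
  have mset : MeasurableSet {y | ENNReal.ofReal c ≤ φ y} := measurableSet_le measurable_const hφ
  have h1 : volume (S ∩ {y | ENNReal.ofReal c ≤ φ y}) ≤ ENNReal.ofReal (m/c) := by
    rw [ENNReal.ofReal_div_of_pos hc, ENNReal.le_div_iff_mul_le (by left; simpa using hc) (by left; finiteness), mul_comm]
    refine le_trans ?_ hI
    have := mul_meas_ge_le_lintegral (μ := volume.restrict S) hφ (ENNReal.ofReal c)
    rw [Measure.restrict_apply mset, Set.inter_comm] at this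
    exact this
  rw [ENNReal.ofReal_sub _ (by positivity), tsub_le_iff_right]
  calc _ ≤ volume S := hs
    _ ≤ volume ({y | y ∈ S ∧ φ y < ENNReal.ofReal c} ∪ (S ∩ {y | ENNReal.ofReal c ≤ φ y})) := by
        apply measure_mono
        intro y hy
        rcases lt_or_ge (φ y) (ENNReal.ofReal c) with h | h
        · left; exact ⟨hy, h⟩
        · right; exact ⟨hy, h⟩
    _ ≤ _ := measure_union_le _ _
    _ ≤ _ := by gcongr

theorem measurable_bad {n : ℕ} {E : Set (Pt n)} (hE : MeasurableSet E) (b : OrthonormalBasis (Fin n) ℝ (Vec n))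
    (r : Fin n → ℝ) (h0 : Pt n) :
    Measurable fun y => volume {a | a ∈ sl E (y, 2*⟪h0.1, y⟫ - h0.2) ∧ a - h0.1 ∉ box b r} := by
  have : MeasurableSet {q : Vec n × Vec n | (q.2, 2*⟪q.1, q.2⟫ - (2*⟪h0.1, q.1⟫ - h0.2)) ∈ E ∧ q.2 - h0.1 ∉ box b r} := by
    apply MeasurableSet.inter
    · have : Measurable fun q : Vec n × Vec n => ((q.2, 2*⟪q.1, q.2⟫ - (2*⟪h0.1, q.1⟫ - h0.2)) : Pt n) := by fun_prop
      exact this hE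
    · have : Measurable fun q : Vec n × Vec n => q.2 - h0.1 := by fun_prop
      exact this (measurableSet_box b r).compl
  exact measurable_measure_prodMk_left this

/-- one application of `lemB` plus Markov -/
theorem stepB {n : ℕ} (b : OrthonormalBasis (Fin n) ℝ (Vec n)) {σ : Fin n → ℝ} (hσ : ∀ j, 0 < σ j)
    {E : Set (Pt n)} (hE : MeasurableSet E) {e : ℝ} (he : 0 ≤ e) (hEv : volume E ≤ ENNReal.ofReal e) (h0 : Pt n) (y0 : Vec n) {l : ℝ} (hl : 0 < l)
    {S : Set (Vec n)} (hS : ∀ y ∈ S, y - y0 ∈ box b σ) {s c : ℝ} (hs : ENNReal.ofReal s ≤ volume S) (hc : 0 < c) :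
    ENNReal.ofReal (s - (4^n * ∏ j, σ j) * e / l / c) ≤ volume {y | y ∈ S ∧ 
      volume {a | a ∈ sl E (y, 2*⟪h0.1, y⟫ - h0.2) ∧ a - h0.1 ∉ box b (fun j => l / σ j)} < ENNReal.ofReal c} := by
  have hP : 0 < ∏ j, σ j := Finset.prod_pos fun j _ => hσ j
  apply markov_good (measurable_bad hE b _ h0) hc (by positivity) hs
  have := lemB b σ hσ hE h0 y0 l hl
  rw [ENNReal.ofReal_div_of_pos hl, ENNReal.le_div_iff_mul_le (by left; simpa using hl) (by left; finiteness), mul_comm]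
  calc _ ≤ _ := by
        gcongr
        exact fun y hy => hS y hy
    _ ≤ _ := this
    _ ≤ ENNReal.ofReal (4^n * ∏ j, σ j) * ENNReal.ofReal e := by gcongr
    _ = _ := (ENNReal.ofReal_mul (by positivity)).symm

/-- good part is large if the bad part is small -/
theorem good_part {n : ℕ} {A W : Set (Vec n)} {p q : ℝ} (hq : 0 ≤ q)
    (h1 : ENNReal.ofReal p ≤ volume A) (h2 : volume {a | a ∈ A ∧ a ∉ W} ≤ ENNReal.ofReal q) :
    ENNReal.ofReal (p - q) ≤ volume {a | a ∈ A ∧ a ∈ W} := by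
  rw [ENNReal.ofReal_sub _ hq, tsub_le_iff_right]
  calc _ ≤ _ := h1
    _ ≤ volume ({a | a ∈ A ∧ a ∈ W} ∪ {a | a ∈ A ∧ a ∉ W}) := by
      apply measure_mono
      intro a ha
      by_cases h : a ∈ W
      · left; exact ⟨ha, h⟩
      · right; exact ⟨ha, h⟩
    _ ≤ _ := measure_union_le _ _
    _ ≤ _ := by gcongr

theorem inner_box {n : ℕ} (b : OrthonormalBasis (Fin n) ℝ (Vec n)) {u v : Vec n} {r s : Fin n → ℝ} {ρ : ℝ}
    (hu : u ∈ box b r) (hv : v ∈ box b s) (h : ∀ j, r j * s j ≤ ρ) : |⟪u, v⟫| ≤ n * ρ := by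
  rw [← b.sum_inner_mul_inner u v]
  refine (Finset.abs_sum_le_sum_abs _ _).trans ?_
  calc _ ≤ ∑ j : Fin n, ρ := by
        apply Finset.sum_le_sum
        intro j _
        rw [abs_mul, real_inner_comm]
        refine le_trans ?_ (h j)
        have h1 := hu j
        have h2 := hv j
        gcongr
        exact (abs_nonneg _).trans h1.le
    _ = _ := by simp

def Ecut {n : ℕ} (b : OrthonormalBasis (Fin n) ℝ (Vec n)) (E : Set (Pt n)) (h0 : Pt n) (y0 : Vec n) (r : Fin n → ℝ) (T : ℝ) : Set (Pt n) :=
  {h | h ∈ E ∧ h.1 - h0.1 ∈ box b r ∧ |2*⟪h.1, y0⟫ - h.2 - (2*⟪h0.1, y0⟫ - h0.2)| ≤ T}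

def Fcut {n : ℕ} (b : OrthonormalBasis (Fin n) ℝ (Vec n)) (F : Set (Pt n)) (y0 : Vec n) (r : Fin n → ℝ) : Set (Pt n) :=
  {p | p ∈ F ∧ p.1 - y0 ∈ box b r}

theorem measurableSet_Ecut {n : ℕ} {b : OrthonormalBasis (Fin n) ℝ (Vec n)} {E : Set (Pt n)} (hE : MeasurableSet E) (h0 : Pt n) (y0 : Vec n) (r : Fin n → ℝ) (T : ℝ) :
    MeasurableSet (Ecut b E h0 y0 r T) := by
  refine hE.inter (MeasurableSet.inter ?_ ?_)
  · exact (by fun_prop : Measurable fun h : Pt n => h.1 - h0.1) (measurableSet_box b r)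
  · have : Measurable fun h : Pt n => |2*⟪h.1, y0⟫ - h.2 - (2*⟪h0.1, y0⟫ - h0.2)| := by fun_prop
    exact measurableSet_le this measurable_const

theorem measurableSet_Fcut {n : ℕ} {b : OrthonormalBasis (Fin n) ℝ (Vec n)} {F : Set (Pt n)} (hF : MeasurableSet F) (y0 : Vec n) (r : Fin n → ℝ) :
    MeasurableSet (Fcut b F y0 r) :=
  hF.inter ((by fun_prop : Measurable fun h : Pt n => h.1 - y0) (measurableSet_box b r))

theorem stage2 {n : ℕ} (b : OrthonormalBasis (Fin n) ℝ (Vec n)) {σ : Fin n → ℝ} (hσ : ∀ j, 0 < σ j)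
    {E F : Set (Pt n)} (mE : MeasurableSet E) (mF : MeasurableSet F) {e f α β s : ℝ} (he : 0 < e) (hf : 0 < f)
    (hα : 0 < α) (hβ : 0 < β) (hs : 0 < s) (hEv : volume E ≤ ENNReal.ofReal e) (hFv : volume F ≤ ENNReal.ofReal f)
    (h0 : Pt n) (y0 : Vec n) {S : Set (Vec n)} (hSs : ENNReal.ofReal s ≤ volume S) (hSb : ∀ y ∈ S, y - y0 ∈ box b σ)
    (hSβ : ∀ y ∈ S, ENNReal.ofReal (β/4) ≤ volume (sl (Ri E F (α/2)) (y, 2*⟪h0.1, y⟫ - h0.2)))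
    {D l l2 K l' : ℝ} (hD : D = ∏ j, σ j) (hl : l = 32*4^n*D*e/(s*β)) (hl2 : l2 = 64*4^n*(l^n/D)*f/(α*β))
    (hK : K = l2/l + 1) (hl' : 0 < l') (hl'D : 2^n*(l'^n/D) ≤ β/32) :
    ENNReal.ofReal (l'*s*β/(64*4^n*D)) ≤ 
      volume (Ri (Ecut b E h0 y0 (fun j => l/σ j) (2*(n*l))) (Fcut b F y0 (fun j => K*σ j)) (α/4)) := by
  have hDp : 0 < D := by rw [hD]; exact Finset.prod_pos fun j _ => hσ j
  have hlp : 0 < l := by rw [hl]; positivity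
  have hl2p : 0 < l2 := by rw [hl2]; positivity
  have hprod : ∀ c : ℝ, ∏ j, (c / σ j) = c^n / D := fun c => by
    rw [Finset.prod_div_distrib, hD]; simp
  set E1 := Ri E F (α/2) with hE1
  have mE1 : MeasurableSet E1 := measurableSet_Ri mE mF _
  set F' := Fcut b F y0 (fun j => K*σ j) with hF'
  have mF' : MeasurableSet F' := measurableSet_Fcut mF _ _
  set E' := Ecut b E h0 y0 (fun j => l/σ j) (2*(n*l)) with hE'
  have mE' : MeasurableSet E' := measurableSet_Ecut mE _ _ _ _
  set E3 := Ri E' F' (α/4) with hE3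
  have mE3 : MeasurableSet E3 := measurableSet_Ri mE' mF' _
  -- step a
  have h2a := stepB b hσ mE1 he.le ((measure_mono Ri_sub).trans hEv) h0 y0 hlp hSb hSs (c := β/8) (by positivity)
  set S2 := {y | y ∈ S ∧ volume {a | a ∈ sl E1 (y, 2*⟪h0.1, y⟫ - h0.2) ∧ a - h0.1 ∉ box b (fun j => l / σ j)} < ENNReal.ofReal (β/8)} with hS2
  have hS2v : ENNReal.ofReal (s/2) ≤ volume S2 := by
    refine le_trans (ENNReal.ofReal_le_ofReal ?_) h2a
    rw [← hD]
    have : 4^n * D * e / l / (β/8) = s/4 := by rw [hl]; field_simp; norm_num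
    rw [this]; linarith
  -- step b
  have h2b : ∀ y ∈ S2, ENNReal.ofReal (β/16) ≤ volume (sl E3 (y, 2*⟪h0.1, y⟫ - h0.2)) := by
    intro y hy
    set py : Pt n := (y, 2*⟪h0.1, y⟫ - h0.2) with hpy
    have hA := good_part (A := sl E1 py) (W := {a | a - h0.1 ∈ box b (fun j => l/σ j)}) (by positivity) (hSβ y hy.1) hy.2.le
    set A := {a | a ∈ sl E1 py ∧ a ∈ {a | a - h0.1 ∈ box b (fun j => l/σ j)}} with hAd
    have hA' : ENNReal.ofReal (β/8) ≤ volume A := by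
      refine le_trans (ENNReal.ofReal_le_ofReal ?_) hA
      linarith
    have h3 := stepB b (σ := fun j => l/σ j) (fun j => div_pos hlp (hσ j)) mF hf.le hFv py h0.1 hl2p (S := A) (fun a ha => ha.2) hA'
      (c := α/4) (by positivity)
    refine le_trans (le_trans (ENNReal.ofReal_le_ofReal ?_) h3) (measure_mono ?_)
    · rw [hprod]
      have : 4^n * (l^n/D) * f / l2 / (α/4) = β/16 := by rw [hl2]; field_simp; norm_num
      rw [this]; linarith
    · rintro a ⟨⟨ha1, ha2⟩, ha3⟩
      simp only [Set.mem_ofPred_eq] at ha2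
      have haE1 : (a, 2*⟪y, a⟫ - (2*⟪h0.1, y⟫ - h0.2)) ∈ E1 := ha1
      set h : Pt n := (a, 2*⟪y, a⟫ - (2*⟪h0.1, y⟫ - h0.2)) with hh
      have h4 := good_part (A := sl F h) (W := {v | v - y ∈ box b (fun j => l2/(l/σ j))}) (by positivity) haE1.2 ha3.le
      show h ∈ E3
      refine ⟨⟨haE1.1, ha2, ?_⟩, ?_⟩
      · have h5 := inner_box b ha2 (hSb y hy.1) (ρ := l) (fun j => by have := (hσ j).ne'; field_simp; rfl)
        have h6 : 2*⟪h.1, y0⟫ - h.2 - (2*⟪h0.1, y0⟫ - h0.2) = -(2*⟪a - h0.1, y - y0⟫) := by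
          simp only [hh, inner_sub_left, inner_sub_right]
          rw [real_inner_comm y a]; ring
        rw [h6, abs_neg, abs_mul, abs_two]
        linarith
      · refine le_trans (le_trans (ENNReal.ofReal_le_ofReal ?_) h4) (measure_mono ?_)
        · linarith
        · rintro v ⟨hv1, hv2⟩
          refine ⟨hv1, ?_⟩
          intro j
          have h7 := hv2 j
          have h8 := hSb y hy.1 j
          have h9 : v - y0 = (v - y) + (y - y0) := by abel
          show |⟪b j, v - y0⟫| < K * σ j
          rw [h9, inner_add_right]
          calc _ ≤ _ := abs_add_le _ _
            _ < l2/(l/σ j) + σ j := by gcongr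
            _ = _ := by rw [hK]; have := (hσ j).ne'; field_simp
  -- step c
  have h2c : ∀ y ∈ S2, ENNReal.ofReal (β/32) ≤ volume {a | a ∈ sl E3 (y, 2*⟪h0.1, y⟫ - h0.2) ∧ a - h0.1 ∉ box b (fun j => l' / σ j)} := by
    intro y hy
    have h3 := good_part (A := sl E3 (y, 2*⟪h0.1, y⟫ - h0.2)) (W := {a | a - h0.1 ∉ box b (fun j => l' / σ j)}) (q := β/32) (by positivity) (h2b y hy) (by
      calc _ ≤ volume ((fun a => a + (-h0.1)) ⁻¹' box b (fun j => l'/σ j)) := by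
            apply measure_mono
            rintro a ⟨-, ha⟩
            simp only [Set.mem_ofPred_eq, not_not] at ha
            rw [Set.mem_preimage, ← sub_eq_add_neg]; exact ha
        _ = ENNReal.ofReal (2^n * (l'^n/D)) := by
            rw [measure_preimage_add_right, volume_box _ _ (fun j => div_pos hl' (hσ j)), hprod]
        _ ≤ _ := ENNReal.ofReal_le_ofReal hl'D)
    refine le_trans (ENNReal.ofReal_le_ofReal ?_) h3
    linarith
  have hB := lemB b σ hσ mE3 h0 y0 l' hl'
  have hlow : ENNReal.ofReal (β/32) * ENNReal.ofReal (s/2) ≤ ∫⁻ y in {y | y - y0 ∈ box b σ},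
      volume {a | a ∈ sl E3 (y, 2 * ⟪h0.1, y⟫ - h0.2) ∧ a - h0.1 ∉ box b (fun j => l' / σ j)} := by
    have mφ := measurable_bad mE3 b (fun j => l'/σ j) h0
    refine le_trans ?_ (mul_meas_ge_le_lintegral mφ (ENNReal.ofReal (β/32)))
    rw [Measure.restrict_apply (measurableSet_le measurable_const mφ)]
    gcongr
    refine hS2v.trans (measure_mono ?_)
    intro y hy
    exact ⟨h2c y hy, hSb y hy.1⟩
  have hfin : ENNReal.ofReal (l' * (β/32 * (s/2))) ≤ ENNReal.ofReal (4^n*D) * volume E3 := by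
    rw [ENNReal.ofReal_mul hl'.le, ENNReal.ofReal_mul (by positivity)]
    rw [← hD] at hB
    refine le_trans ?_ hB
    gcongr
  have h5 : l'*s*β/(64*4^n*D) = l' * (β/32 * (s/2)) / (4^n*D) := by field_simp; norm_num
  rw [h5, ENNReal.ofReal_div_of_pos (by positivity)]
  exact ENNReal.div_le_of_le_mul' hfin

/-- half of a ball, in linear coordinates -/
def LB {n : ℕ} (b : OrthonormalBasis (Fin n) ℝ (Vec n)) (c : Vec n) (q : Pt n) (r : Fin n → ℝ) (ρ : ℝ) : Set (Pt n) :=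
  {h | h.1 - c ∈ box b r ∧ |2*⟪h.1, q.1⟫ - h.2 - q.2| < ρ}

theorem measurableSet_LB {n : ℕ} (b : OrthonormalBasis (Fin n) ℝ (Vec n)) (c : Vec n) (q : Pt n) (r : Fin n → ℝ) (ρ : ℝ) :
    MeasurableSet (LB b c q r ρ) := by
  refine MeasurableSet.inter ?_ ?_
  · exact (by fun_prop : Measurable fun h : Pt n => h.1 - c) (measurableSet_box b r)
  · have : Measurable fun h : Pt n => |2*⟪h.1, q.1⟫ - h.2 - q.2| := by fun_prop
    exact measurableSet_lt this measurable_const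

theorem volume_LB {n : ℕ} (b : OrthonormalBasis (Fin n) ℝ (Vec n)) (c : Vec n) (q : Pt n) (r : Fin n → ℝ) (hr : ∀ j, 0 < r j) {ρ : ℝ} (hρ : 0 < ρ) :
    volume (LB b c q r ρ) = ENNReal.ofReal ((2^n * ∏ j, r j) * (2*ρ)) := by
  rw [Measure.volume_eq_prod, Measure.prod_apply (measurableSet_LB b c q r ρ)]
  have key : ∀ v : Vec n, volume (Prod.mk v ⁻¹' LB b c q r ρ) = ((fun a => a + (-c)) ⁻¹' box b r).indicator (fun _ => ENNReal.ofReal (2*ρ)) v := by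
    intro v
    by_cases hv : v - c ∈ box b r
    · rw [Set.indicator_of_mem (by rw [Set.mem_preimage, ← sub_eq_add_neg]; exact hv)]
      have : Prod.mk v ⁻¹' LB b c q r ρ = Metric.ball (2*⟪v, q.1⟫ - q.2) ρ := by
        ext z
        simp only [LB, Set.mem_preimage, Set.mem_ofPred_eq, hv, true_and, Metric.mem_ball, Real.dist_eq]
        rw [← abs_neg]
        ring_nf
      rw [this, Real.volume_ball]
    · rw [Set.indicator_of_notMem (by rw [Set.mem_preimage, ← sub_eq_add_neg]; exact hv)]
      have : Prod.mk v ⁻¹' LB b c q r ρ = ∅ := by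
        ext z
        simp [LB, hv]
      rw [this, measure_empty]
  simp_rw [key]
  rw [lintegral_indicator_const ((by fun_prop : Measurable fun a : Vec n => a + (-c)) (measurableSet_box b r)), measure_preimage_add_right, volume_box _ _ hr, mul_comm,
    ← ENNReal.ofReal_mul (by have := Finset.prod_pos fun j (_ : j ∈ Finset.univ) => hr j; positivity)]

theorem stage3 {n : ℕ} (hn : 1 ≤ n) (b : OrthonormalBasis (Fin n) ℝ (Vec n)) {σ : Fin n → ℝ} (hσ : ∀ j, 0 < σ j)
    {E F : Set (Pt n)} (mE : MeasurableSet E) (mF : MeasurableSet F) (h0 : Pt n) (y0 : Vec n) {l K θ κ : ℝ} (hl : 0 < l) (hK : 1 ≤ K)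
    (hθ : 0 < θ) (hθ1 : θ ≤ 1) (hκ : κ = θ^2/(3*n))
    (hE : ∀ h ∈ E, h.1 - h0.1 ∈ box b (fun j => l/σ j) ∧ |2*⟪h.1, y0⟫ - h.2 - (2*⟪h0.1, y0⟫ - h0.2)| ≤ 2*(n*l))
    (hF : ∀ p ∈ F, p.1 - y0 ∈ box b (fun j => K*σ j)) (hJ : 0 < JJ E F) :
    ∃ hb pb : Pt n, pb.2 = 2*⟪hb.1, pb.1⟫ - hb.2 ∧
      JJ E F ≤ ENNReal.ofReal ((4*n/κ+3)^(2*n+1)) * 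
        JJ (E ∩ LB b hb.1 pb (fun j => θ*(l/σ j)) (θ^2*(l*K))) (F ∩ LB b pb.1 hb (fun j => θ*(K*σ j)) (θ^2*(l*K))) := by
  have hn' : (1:ℝ) ≤ n := by exact_mod_cast hn
  have hκp : 0 < κ := by rw [hκ]; positivity
  have hκθ : κ ≤ θ := by
    rw [hκ, div_le_iff₀ (by positivity)]; nlinarith
  have hKp : 0 < K := by linarith
  have hκ3 : 3*n*κ = θ^2 := by rw [hκ]; field_simp
  let X : Pt n × Vec n → (Fin n ⊕ Fin n) ⊕ Unit → ℝ := fun q => Sum.elim (Sum.elim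
    (fun j => ⟪b j, q.1.1 - h0.1⟫ / (l/σ j)) (fun j => ⟪b j, q.2 - y0⟫ / (K * σ j)))
      (fun _ => (2*⟪q.1.1, y0⟫ - q.1.2 - (2*⟪h0.1, y0⟫ - h0.2)) / (l*K))
  have hX : ∀ q ∈ GG E F, ∀ i, |X q i| ≤ 2*n := by
    rintro ⟨h, v⟩ ⟨hq1, hq2⟩ ((j | j) | j)
    · have := (hE h hq1).1 j
      have h2 : 0 < l/σ j := div_pos hl (hσ j)
      simp only [X, Sum.elim_inl]
      rw [abs_div, abs_of_pos h2, div_le_iff₀ h2]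
      nlinarith
    · have := hF _ hq2 j
      have h2 : 0 < K*σ j := mul_pos hKp (hσ j)
      simp only [X, Sum.elim_inl, Sum.elim_inr]
      rw [abs_div, abs_of_pos h2, div_le_iff₀ h2]
      simp only at this
      nlinarith
    · have := (hE h hq1).2
      have h2 : 0 < l*K := by positivity
      simp only [X, Sum.elim_inr]
      rw [abs_div, abs_of_pos h2, div_le_iff₀ h2]
      refine this.trans ?_
      have : n*l*1 ≤ n*l*K := by gcongr
      nlinarith
  obtain ⟨G', hG', hGm, hGd⟩ := pigeon volume (GG E F) X hκp (by positivity : (0:ℝ) ≤ 2*n) hX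
  rw [← JJ_eq_vol mE mF] at hGm
  have hcard : Fintype.card ((Fin n ⊕ Fin n) ⊕ Unit) = 2*n+1 := by simp; ring
  rw [hcard] at hGm
  have hne : G'.Nonempty := by
    by_contra hne
    rw [Set.not_nonempty_iff_eq_empty] at hne
    rw [hne, measure_empty, mul_zero] at hGm
    exact absurd hJ (not_lt.2 hGm)
  obtain ⟨⟨hb, vb⟩, hbG⟩ := hne
  refine ⟨hb, (vb, 2*⟪hb.1, vb⟫ - hb.2), rfl, hGm.trans ?_⟩
  rw [JJ_eq_vol (mE.inter (measurableSet_LB ..)) (mF.inter (measurableSet_LB ..)), show 2*(2*(n:ℝ)) = 4*n by ring]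
  gcongr
  rintro ⟨h, v⟩ hq
  obtain ⟨hq1, hq2⟩ := hG' hq
  obtain ⟨-, hb2⟩ := hG' hbG
  simp only at hq1 hq2 hb2
  have d1 : h.1 - hb.1 ∈ box b (fun j => κ*(l/σ j)) := by
    intro j
    have := hGd _ hq _ hbG (Sum.inl (Sum.inl j))
    have h2 : 0 < l/σ j := div_pos hl (hσ j)
    simp only [X, Sum.elim_inl] at this
    rw [← sub_div, abs_div, abs_of_pos h2, div_lt_iff₀ h2, ← inner_sub_right] at this
    simpa using this
  have d2 : v - vb ∈ box b (fun j => κ*(K*σ j)) := by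
    intro j
    have := hGd _ hq _ hbG (Sum.inl (Sum.inr j))
    have h2 : 0 < K*σ j := mul_pos hKp (hσ j)
    simp only [X, Sum.elim_inl, Sum.elim_inr] at this
    rw [← sub_div, abs_div, abs_of_pos h2, div_lt_iff₀ h2, ← inner_sub_right] at this
    simpa using this
  have d3 : |(2*⟪h.1, y0⟫ - h.2) - (2*⟪hb.1, y0⟫ - hb.2)| < κ*(l*K) := by
    have := hGd _ hq _ hbG (Sum.inr ())
    have h2 : 0 < l*K := by positivity
    simp only [X, Sum.elim_inr] at this
    rw [← sub_div, abs_div, abs_of_pos h2, div_lt_iff₀ h2] at this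
    rwa [sub_sub_sub_cancel_right] at this
  have d4 : ∀ w : Vec n, w - y0 ∈ box b (fun j => K*σ j) → |2*⟪h.1, w⟫ - h.2 - (2*⟪hb.1, w⟫ - hb.2)| < θ^2*(l*K) := by
    intro w hw
    have h5 := inner_box b d1 hw (ρ := κ*(l*K)) (fun j => by have := (hσ j).ne'; apply le_of_eq; field_simp)
    have h6 : 2*⟪h.1, w⟫ - h.2 - (2*⟪hb.1, w⟫ - hb.2) = 2*⟪h.1 - hb.1, w - y0⟫ + ((2*⟪h.1, y0⟫ - h.2) - (2*⟪hb.1, y0⟫ - hb.2)) := by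
      simp only [inner_sub_left, inner_sub_right]; ring
    rw [h6, ← hκ3]
    calc _ ≤ _ := abs_add_le _ _
      _ < 2*(n*(κ*(l*K))) + κ*(l*K) := by
          rw [abs_mul, abs_two]; linarith
      _ ≤ _ := by
          have : 0 < κ*(l*K) := by positivity
          nlinarith
  have w1 := d4 vb (hF (vb, 2*⟪hb.1, vb⟫ - hb.2) hb2)
  have w2 := d4 v (hF (v, 2*⟪h.1, v⟫ - h.2) hq2)
  refine ⟨⟨hq1, ?_, ?_⟩, hq2, ?_, ?_⟩
  · intro j
    refine (d1 j).trans_le ?_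
    exact mul_le_mul_of_nonneg_right hκθ (div_pos hl (hσ j)).le
  · exact w1
  · intro j
    refine (d2 j).trans_le ?_
    exact mul_le_mul_of_nonneg_right hκθ (mul_pos hKp (hσ j)).le
  · rw [← abs_neg] at w2
    show |2*⟪v, hb.1⟫ - (2*⟪h.1, v⟫ - h.2) - hb.2| < _
    rw [real_inner_comm hb.1 v]
    convert w2 using 2
    ring

set_option maxHeartbeats 2000000 in
theorem params {n : ℕ} (hn : 1 ≤ n) {α β ω s D X l l2 K l' θ : ℝ} (hα : 0 < α) (hβ : 0 < β) (hω : 0 < ω) (hs : 0 < s) (hD : 0 < D)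
    (hX : 64*4^n ≤ X) (h1 : α ≤ X*s) (h2 : D ≤ X*α) (h3 : s ≤ 2^n*D) (h4 : ω^n ≤ X*(α*β))
    (hl : l = 32*4^n*D*(β*ω)/(s*β)) (hl2 : l2 = 64*4^n*(l^n/D)*(α*ω)/(α*β)) (hK : K = l2/l+1) (hl' : l' = ω/X^3) (hθ : θ = 1/X^(3*n+9)) :
    0 < l ∧ 1 ≤ K ∧ 2^n*(l'^n/D) ≤ β/32 ∧ β*ω/X^6 ≤ l'*s*β/(64*4^n*D) ∧
    2^(n+1)*θ^(n+2)*(l^(n+1)*K/D) ≤ β*ω ∧ 2^(n+1)*θ^(n+2)*(K^(n+1)*D*l) ≤ α*ω ∧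
    (4*n/(θ^2/(3*n))+3)^(2*n+1) ≤ X^((6*n+19)*(2*n+1)) := by
  have e4 : (1:ℝ) ≤ 4^n := one_le_pow₀ (by norm_num)
  have e24 : (2:ℝ)^n ≤ 4^n := pow_le_pow_left₀ (by norm_num) (by norm_num) n
  have e22 : (2:ℝ)^n*2^n = 4^n := by rw [← mul_pow]; norm_num
  have X64 : 64 ≤ X := by linarith
  have X1 : 1 ≤ X := by linarith
  have Xp : 0 < X := by linarith
  have hDs : D ≤ X^2*s := by nlinarith
  have hlp : 0 < l := by rw [hl]; positivity
  have hl2p : 0 < l2 := by rw [hl2]; positivity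
  have hl' : l' = ω/X^3 := hl'
  have hl0 : l = 32*4^n*(D/s)*ω := by rw [hl]; field_simp
  have hlω : ω ≤ l := by
    rw [hl0]
    have : 1 ≤ 32*4^n*(D/s) := by
      rw [← mul_div_assoc, le_div_iff₀ hs]
      have : (2:ℝ)^n*D ≤ 4^n*D := by gcongr
      nlinarith [mul_pos (by positivity : (0:ℝ) < 4^n) hD]
    nlinarith
  have hlX : l ≤ X^3*ω := by
    rw [hl0]
    have : D/s ≤ X^2 := by rw [div_le_iff₀ hs]; exact hDs
    calc _ ≤ X*X^2*ω := by gcongr; linarith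
      _ = _ := by ring
  have hDα : α ≤ 2^n*X*D := by
    calc _ ≤ X*s := h1
      _ ≤ X*(2^n*D) := by gcongr
      _ = _ := by ring
  have hln : l^n ≤ X^(3*n+1)*(α*β) := by
    calc l^n ≤ (X^3*ω)^n := by gcongr
      _ = X^(3*n)*ω^n := by rw [mul_pow, pow_mul]
      _ ≤ X^(3*n)*(X*(α*β)) := by gcongr
      _ = _ := by ring
  have hK1 : 1 ≤ K := by rw [hK]; have : 0 < l2/l := by positivity
                         linarith
  have hKX : K ≤ X^(3*n+4) := by
    have h5 : l2/l ≤ X^(3*n+3)*2^n := by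
      have : l2/l = 64*4^n*l^n*(ω/l)/(D*β) := by rw [hl2]; field_simp
      rw [this, div_le_iff₀ (by positivity)]
      have h6 : ω/l ≤ 1 := by rw [div_le_one hlp]; exact hlω
      calc _ ≤ X*(X^(3*n+1)*(α*β))*1 := by gcongr
        _ ≤ X*(X^(3*n+1)*((2^n*X*D)*β))*1 := by gcongr
        _ = _ := by ring
    calc K ≤ X^(3*n+3)*2^n+1 := by rw [hK]; linarith
      _ ≤ X^(3*n+3)*2^n + X^(3*n+3)*1 := by
          have : (1:ℝ) ≤ X^(3*n+3) := one_le_pow₀ X1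
          linarith
      _ = X^(3*n+3)*(2^n+1) := by ring
      _ ≤ X^(3*n+3)*X := by gcongr; linarith
      _ = _ := by ring
  have hKp : 0 < K := by linarith
  have hθp : 0 < θ := by rw [hθ]; positivity
  refine ⟨hlp, hK1, ?_, ?_, ?_, ?_, ?_⟩
  · rw [hl', div_pow, ← pow_mul]
    rw [← mul_div_assoc, div_le_iff₀ hD, ← mul_div_assoc, div_le_iff₀ (by positivity)]
    calc 2^n*ω^n ≤ 2^n*(X*((2^n*X*D)*β)) := by
          gcongr; exact h4.trans (by gcongr)
      _ = 4^n*X^2*(D*β) := by rw [← e22]; ring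
      _ ≤ (X/32)*X^2*(D*β) := by gcongr; linarith
      _ = β/32*D*X^3 := by ring
      _ ≤ β/32*D*X^(3*n) := by gcongr; omega
  · rw [hl', div_le_div_iff₀ (by positivity) (by positivity)]
    calc β*ω*(64*4^n*D) ≤ β*ω*(X*(X^2*s)) := by gcongr
      _ = ω/X^3*s*β*X^6 := by field_simp
  · have hθ' : θ^(n+2)*X^(6*n+10) ≤ 1 := by
      rw [hθ, div_pow, ← pow_mul, one_pow, one_div, inv_mul_le_iff₀ (by positivity), mul_one]
      apply pow_le_pow_right₀ X1; nlinarith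
    have : l^(n+1)*K/D ≤ X^(6*n+9)*2^n*(β*ω) := by
      rw [div_le_iff₀ hD]
      calc l^(n+1)*K = l^n*l*K := by ring
        _ ≤ (X^(3*n+1)*((2^n*X*D)*β))*(X^3*ω)*X^(3*n+4) := by
          gcongr; exact hln.trans (by gcongr)
        _ = _ := by ring
    calc _ ≤ 2^(n+1)*θ^(n+2)*(X^(6*n+9)*2^n*(β*ω)) := by gcongr
      _ = (2*4^n)*(X^(6*n+9)*θ^(n+2))*(β*ω) := by rw [← e22]; ring
      _ ≤ X*(X^(6*n+9)*θ^(n+2))*(β*ω) := by gcongr; linarith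
      _ = (θ^(n+2)*X^(6*n+10))*(β*ω) := by ring
      _ ≤ 1*(β*ω) := by gcongr
      _ = _ := one_mul _
  · have hθ' : θ^(n+2)*X^((3*n+4)*(n+1)+5) ≤ 1 := by
      rw [hθ, div_pow, ← pow_mul, one_pow, one_div, inv_mul_le_iff₀ (by positivity), mul_one]
      apply pow_le_pow_right₀ X1; nlinarith
    calc _ ≤ 2^(n+1)*θ^(n+2)*((X^(3*n+4))^(n+1)*(X*α)*(X^3*ω)) := by gcongr
      _ = (2*2^n)*(θ^(n+2)*X^((3*n+4)*(n+1)+4))*(α*ω) := by rw [← pow_mul]; ring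
      _ ≤ X*(θ^(n+2)*X^((3*n+4)*(n+1)+4))*(α*ω) := by gcongr; linarith
      _ = (θ^(n+2)*X^((3*n+4)*(n+1)+5))*(α*ω) := by ring
      _ ≤ 1*(α*ω) := by gcongr
      _ = _ := one_mul _
  · have hn1 : (1:ℝ) ≤ n := by exact_mod_cast hn
    have hnn : (n:ℝ)^2 ≤ 4^n := by
      have : n < 2^n := Nat.lt_two_pow_self
      have h : (n:ℝ) ≤ 2^n := by exact_mod_cast this.le
      rw [← e22, sq]; gcongr
    have : 4*n/(θ^2/(3*n))+3 ≤ X^(6*n+19) := by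
      have h5 : 4*n/(θ^2/(3*n)) = 12*n^2*X^(6*n+18) := by
        rw [hθ, div_pow, ← pow_mul, show (3*n+9)*2 = 6*n+18 by ring]; field_simp; norm_num
      have h6 : (1:ℝ) ≤ X^(6*n+18) := one_le_pow₀ X1
      rw [h5]
      calc _ ≤ 12*(n:ℝ)^2*X^(6*n+18) + 3*(n:ℝ)^2*X^(6*n+18) := by
            have : (1:ℝ) ≤ (n:ℝ)^2*X^(6*n+18) := one_le_mul_of_one_le_of_one_le (by nlinarith) h6
            generalize X^(6*n+18) = Y at *
            linarith
        _ = 15*(n:ℝ)^2*X^(6*n+18) := by ring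
        _ ≤ X*X^(6*n+18) := by
            refine mul_le_mul_of_nonneg_right ?_ (by linarith)
            linarith
        _ = _ := by rw [← pow_succ']
    rw [pow_mul]
    exact pow_le_pow_left₀ (by positivity) this _

theorem prod_scale {n : ℕ} (σ : Fin n → ℝ) (c : ℝ) : ∏ j, (c * σ j) = c^n * ∏ j, σ j := by
  rw [Finset.prod_mul_distrib]; simp

/-- The combination of the three stages, given the quality parameter `X`. -/
theorem combine {n : ℕ} (hn : 1 ≤ n) (b : OrthonormalBasis (Fin n) ℝ (Vec n)) {σ : Fin n → ℝ} (hσ : ∀ j, 0 < σ j)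
    {E F : Set (Pt n)} (mE : MeasurableSet E) (mF : MeasurableSet F) {α β ω s X : ℝ}
    (hα : 0 < α) (hβ : 0 < β) (hω : 0 < ω) (hs : 0 < s) (hEv : volume E ≤ ENNReal.ofReal (β*ω)) (hFv : volume F ≤ ENNReal.ofReal (α*ω))
    (h0 : Pt n) (y0 : Vec n) {S : Set (Vec n)} (hSs : volume S = ENNReal.ofReal s) (hSb : ∀ y ∈ S, y - y0 ∈ box b σ)
    (hSβ : ∀ y ∈ S, ENNReal.ofReal (β/4) ≤ volume (sl (Ri E F (α/2)) (y, 2*⟪h0.1, y⟫ - h0.2)))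
    (hX : 64*4^n ≤ X) (h1 : α ≤ X*s) (h2 : ∏ j, σ j ≤ X*α) (h4 : ω^n ≤ X*(α*β)) :
    ∃ (hb pb : Pt n) (r rs : Fin n → ℝ) (ρ : ℝ), pb.2 = 2*⟪hb.1, pb.1⟫ - hb.2 ∧ 0 < ρ ∧ (∀ j, 0 < r j) ∧ (∀ j, 0 < rs j) ∧
      (∀ j, r j * rs j = ρ) ∧ 
      ENNReal.ofReal (α*(β*ω)) ≤ ENNReal.ofReal (X^((6*n+19)*(2*n+1)+7)) * JJ (E ∩ LB b hb.1 pb r ρ) (F ∩ LB b pb.1 hb rs ρ) ∧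
      volume (LB b hb.1 pb r ρ) ≤ ENNReal.ofReal (β*ω) ∧ volume (LB b pb.1 hb rs ρ) ≤ ENNReal.ofReal (α*ω) := by
  obtain ⟨D, hDd⟩ : ∃ D, D = ∏ j, σ j := ⟨_, rfl⟩
  have hD : 0 < D := by rw [hDd]; exact Finset.prod_pos fun j _ => hσ j
  rw [← hDd] at h2
  have e4 : (1:ℝ) ≤ 4^n := one_le_pow₀ (by norm_num)
  have X64 : 64 ≤ X := by linarith
  have Xp : 0 < X := by linarith
  have h3 : s ≤ 2^n*D := by
    have : volume S ≤ ENNReal.ofReal (2^n*D) := by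
      calc _ ≤ volume ((fun a => a + (-y0)) ⁻¹' box b σ) := by
            apply measure_mono
            intro a ha
            rw [Set.mem_preimage, ← sub_eq_add_neg]; exact hSb a ha
        _ = _ := by rw [measure_preimage_add_right, volume_box _ _ hσ, hDd]
    rw [hSs] at this
    exact (ENNReal.ofReal_le_ofReal_iff (by positivity)).1 this
  obtain ⟨l, hl⟩ : ∃ l, l = 32*4^n*D*(β*ω)/(s*β) := ⟨_, rfl⟩
  obtain ⟨l2, hl2⟩ : ∃ l2, l2 = 64*4^n*(l^n/D)*(α*ω)/(α*β) := ⟨_, rfl⟩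
  obtain ⟨K, hK⟩ : ∃ K, K = l2/l+1 := ⟨_, rfl⟩
  obtain ⟨l', hl'⟩ : ∃ l', l' = ω/X^3 := ⟨_, rfl⟩
  obtain ⟨θ, hθ⟩ : ∃ θ, θ = 1/X^(3*n+9) := ⟨_, rfl⟩
  obtain ⟨hlp, hK1, p1, p2, p3, p4, p5⟩ := params hn hα hβ hω hs hD hX h1 h2 h3 h4 hl hl2 hK hl' hθ
  have hKp : 0 < K := by linarith
  have hθp : 0 < θ := by rw [hθ]; positivity
  have hθ1 : θ ≤ 1 := by rw [hθ, div_le_one (by positivity)]; exact one_le_pow₀ (by linarith)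
  have st2 := stage2 b hσ mE mF (mul_pos hβ hω) (mul_pos hα hω) hα hβ hs hEv hFv h0 y0 hSs.ge hSb hSβ hDd hl hl2 hK
    (by rw [hl']; positivity) p1
  set E' := Ecut b E h0 y0 (fun j => l/σ j) (2*(n*l)) with hE'
  set F' := Fcut b F y0 (fun j => K*σ j) with hF'
  have mE' : MeasurableSet E' := measurableSet_Ecut mE _ _ _ _
  have mF' : MeasurableSet F' := measurableSet_Fcut mF _ _
  set E3 := Ri E' F' (α/4) with hE3
  have mE3 : MeasurableSet E3 := measurableSet_Ri mE' mF' _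
  have hJ : ENNReal.ofReal (α/4*(β*ω/X^6)) ≤ JJ E3 F' := by
    rw [ENNReal.ofReal_mul (by positivity)]
    calc _ ≤ ENNReal.ofReal (α/4) * volume E3 := by
          gcongr; exact (ENNReal.ofReal_le_ofReal p2).trans st2
      _ = ∫⁻ h in E3, ENNReal.ofReal (α/4) := by simp
      _ ≤ _ := setLIntegral_mono' mE3 (fun h hh => hh.2)
  have hJp : 0 < JJ E3 F' := lt_of_lt_of_le (by rw [ENNReal.ofReal_pos]; positivity) hJ
  obtain ⟨hb, pb, hpb, hm⟩ := stage3 hn b hσ mE3 mF' h0 y0 hlp hK1 hθp hθ1 rfl (fun h hh => (hh.1).2) (fun p hp => hp.2) hJp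
  refine ⟨hb, pb, fun j => θ*(l/σ j), fun j => θ*(K*σ j), θ^2*(l*K), hpb, by positivity, fun j => mul_pos hθp (div_pos hlp (hσ j)), fun j => mul_pos hθp (mul_pos hKp (hσ j)),
    fun j => ?_, ?_, ?_, ?_⟩
  · have := (hσ j).ne'
    field_simp
  · have hsub : JJ (E3 ∩ LB b hb.1 pb (fun j => θ*(l/σ j)) (θ^2*(l*K))) (F' ∩ LB b pb.1 hb (fun j => θ*(K*σ j)) (θ^2*(l*K))) ≤
        JJ (E ∩ LB b hb.1 pb (fun j => θ*(l/σ j)) (θ^2*(l*K))) (F ∩ LB b pb.1 hb (fun j => θ*(K*σ j)) (θ^2*(l*K))) :=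
      JJ_mono (Set.inter_subset_inter_left _ fun h hh => hh.1.1) (Set.inter_subset_inter_left _ fun p hp => hp.1)
    calc ENNReal.ofReal (α*(β*ω)) ≤ ENNReal.ofReal (X^7 * (α/4*(β*ω/X^6))) := by
          apply ENNReal.ofReal_le_ofReal
          have : X^7 * (α/4*(β*ω/X^6)) = X/4*(α*(β*ω)) := by field_simp
          rw [this]
          have : 0 < α*(β*ω) := by positivity
          nlinarith
      _ ≤ ENNReal.ofReal (X^7) * JJ E3 F' := by
          rw [ENNReal.ofReal_mul (by positivity)]; gcongr
      _ ≤ ENNReal.ofReal (X^7) * (ENNReal.ofReal (X^((6*n+19)*(2*n+1))) * _) := by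
          gcongr
          exact hm.trans (mul_le_mul' (ENNReal.ofReal_le_ofReal p5) hsub)
      _ = _ := by
          rw [← mul_assoc, ← ENNReal.ofReal_mul (by positivity), ← pow_add, add_comm 7]
  · rw [volume_LB _ _ _ _ (fun j => mul_pos hθp (div_pos hlp (hσ j))) (by positivity)]
    refine ENNReal.ofReal_le_ofReal (le_trans (le_of_eq ?_) p3)
    rw [prod_scale, Finset.prod_div_distrib, ← hDd]
    simp only [Finset.prod_const, Finset.card_univ, Fintype.card_fin]
    ring
  · rw [volume_LB _ _ _ _ (fun j => mul_pos hθp (mul_pos hKp (hσ j))) (by positivity)]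
    refine ENNReal.ofReal_le_ofReal (le_trans (le_of_eq ?_) p4)
    rw [prod_scale, prod_scale, ← hDd]
    ring

theorem linear_thm (k : ℕ) : ∃ (C : ℝ) (N : ℕ), 1 ≤ C ∧ 1 ≤ N ∧ ∀ (E F : Set (Pt (k+1))) (e f t δ : ℝ), MeasurableSet E → MeasurableSet F →
    0 < e → 0 < f → 0 < t → 0 < δ → volume E = ENNReal.ofReal e → volume F = ENNReal.ofReal f → JJ E F = ENNReal.ofReal t →
    δ*(e*f)^(k+1+1) ≤ t^(k+1+2) → δ ≤ C ∧
    ∃ (b : OrthonormalBasis (Fin (k+1)) ℝ (Vec (k+1))) (hb pb : Pt (k+1)) (r rs : Fin (k+1) → ℝ) (ρ : ℝ),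
      pb.2 = 2*⟪hb.1, pb.1⟫ - hb.2 ∧ 0 < ρ ∧ (∀ j, 0 < r j) ∧ (∀ j, 0 < rs j) ∧
      (∀ j, r j * rs j = ρ) ∧ 
      ENNReal.ofReal (C⁻¹*δ^N*t) ≤ JJ (E ∩ LB b hb.1 pb r ρ) (F ∩ LB b pb.1 hb rs ρ) ∧
      volume (LB b hb.1 pb r ρ) ≤ volume E ∧ volume (LB b pb.1 hb rs ρ) ≤ volume F := by
  obtain ⟨C1, hC1, H⟩ := stage1 k
  set n := k+1 with hn
  have hn1 : 1 ≤ n := by omega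
  obtain ⟨M, hM⟩ : ∃ M, M = n^2+n+1 := ⟨_, rfl⟩
  obtain ⟨P, hP⟩ : ∃ P, P = (6*n+19)*(2*n+1)+7 := ⟨_, rfl⟩
  obtain ⟨C', hC'⟩ : ∃ C', C' = C1*(64*4^n) := ⟨_, rfl⟩
  have e4 : (1:ℝ) ≤ 4^n := one_le_pow₀ (by norm_num)
  have hC'1 : C1 ≤ C' := by rw [hC']; nlinarith
  have hC'2 : 64*4^n ≤ C' := by rw [hC']; nlinarith
  have hC'0 : 1 ≤ C' := by linarith
  have hbig : C1 ≤ (C'*C1^M)^P := by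
    have h1 : C' ≤ C'*C1^M := by
      have : (1:ℝ) ≤ C1^M := one_le_pow₀ hC1
      nlinarith
    calc C1 ≤ C'*C1^M := by linarith
      _ ≤ _ := le_self_pow₀ (by linarith) (by omega)
  refine ⟨(C'*C1^M)^P, M*P, by linarith, Nat.mul_pos (by omega) (by omega), ?_⟩
  intro E F e f t δ mE mF he hf ht hδ hE hF hJ hq
  obtain ⟨hδC, b, σ, h0, y0, S, s, hσ, mS, hs, hSs, hSb, hSβ, i1, i2⟩ := H E F e f t δ mE mF he hf ht hδ hE hF hJ hq
  refine ⟨hδC.trans hbig, b, ?_⟩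
  obtain ⟨δ1, hδ1⟩ : ∃ δ1, δ1 = δ/C1 := ⟨_, rfl⟩
  have hδ1p : 0 < δ1 := by rw [hδ1]; positivity
  have hδ11 : δ1 ≤ 1 := by rw [hδ1, div_le_one (by positivity)]; exact hδC
  have hδ1δ : δ1 ≤ δ := by rw [hδ1]; exact div_le_self hδ.le hC1
  obtain ⟨X, hXd⟩ : ∃ X, X = C'/δ1^M := ⟨_, rfl⟩
  have hXp : 0 < X := by rw [hXd]; positivity
  have hpow : ∀ m ≤ M, δ1^M ≤ δ^m := fun m hm =>
    (pow_le_pow_of_le_one hδ1p.le hδ11 hm).trans (pow_le_pow_left₀ hδ1p.le hδ1δ m)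
  have hX1 : ∀ m ≤ M, C1 ≤ X*δ^m := fun m hm => by
    calc C1 ≤ C' := hC'1
      _ = X*δ1^M := by rw [hXd]; field_simp
      _ ≤ _ := by gcongr; exact hpow m hm
  have hC'X : C' ≤ X := by
    rw [hXd, le_div_iff₀ (by positivity)]
    have : δ1^M ≤ 1 := pow_le_one₀ hδ1p.le hδ11
    nlinarith
  have transfer : ∀ m ≤ M, ∀ a c : ℝ, 0 < a → 0 ≤ c → δ^m*a ≤ C1*c → a ≤ X*c := by
    intro m hm a c ha hc h
    have h2 := hX1 m hm
    have h3 : 0 < δ^m := by positivity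
    have : δ^m*a ≤ δ^m*(X*c) := by
      calc _ ≤ C1*c := h
        _ ≤ (X*δ^m)*c := by gcongr
        _ = _ := by ring
    exact le_of_mul_le_mul_left this h3
  have hα : 0 < t/e := by positivity
  have hβ : 0 < t/f := by positivity
  have hω : 0 < e*f/t := by positivity
  have q1 : t/f*(e*f/t) = e := by field_simp
  have q2 : t/e*(e*f/t) = f := by field_simp
  have a1 : t/e ≤ X*s := transfer n (by rw [hM]; omega) _ _ hα hs.le i1
  have a2 : ∏ j, σ j ≤ X*(t/e) := transfer (n^2+1) (by rw [hM]; omega) _ _ (Finset.prod_pos fun j _ => hσ j) hα.le i2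
  have a4 : (e*f/t)^n ≤ X*(t/e*(t/f)) := by
    apply transfer 1 (by rw [hM]; omega) _ _ (by positivity) (by positivity)
    rw [pow_one, div_pow, ← mul_div_assoc, div_le_iff₀ (by positivity)]
    have : δ*(e*f)^n ≤ t^(n+2)/(e*f) := by
      rw [le_div_iff₀ (by positivity)]
      calc _ = δ*(e*f)^(n+1) := by ring
        _ ≤ _ := hq
    calc _ ≤ 1*(t^(n+2)/(e*f)) := by linarith
      _ ≤ C1*(t^(n+2)/(e*f)) := by gcongr
      _ = _ := by field_simp; ring
  obtain ⟨hb, pb, r, rs, ρ, c1, c2, c3, c4, c5, c6, c7, c8⟩ := combine hn1 b hσ mE mF hα hβ hω hs (by rw [q1, hE]) (by rw [q2, hF])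
    h0 y0 hSs hSb (by rw [div_div, div_div] at *; simpa [div_div] using hSβ) (hC'2.trans hC'X) a1 a2 a4
  rw [q1, ← hE] at c7
  rw [q2, ← hF] at c8
  refine ⟨hb, pb, r, rs, ρ, c1, c2, c3, c4, c5, ?_, c7, c8⟩
  rw [q1, ← hP, div_mul_cancel₀ _ he.ne'] at c6
  have hXP : X^P = (C'*C1^M)^P/δ^(M*P) := by
    rw [hXd, hδ1, pow_mul, ← div_pow, div_pow δ]
    congr 1
    field_simp
  have h7 : ENNReal.ofReal t / ENNReal.ofReal (X^P) ≤ JJ (E ∩ LB b hb.1 pb r ρ) (F ∩ LB b pb.1 hb rs ρ) := ENNReal.div_le_of_le_mul' c6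
  refine le_trans (le_of_eq ?_) h7
  rw [← ENNReal.ofReal_div_of_pos (by positivity), hXP]
  congr 1
  field_simp

def shE {n : ℕ} (h : Pt n) : Pt n := (h.1, ‖h.1‖^2 - h.2)
def shF {n : ℕ} (p : Pt n) : Pt n := (p.1, p.2 - ‖p.1‖^2)
def shG {n : ℕ} (p : Pt n) : Pt n := (p.1, p.2 + ‖p.1‖^2)

theorem shE_shE {n : ℕ} (h : Pt n) : shE (shE h) = h := by simp [shE]
theorem shF_shG {n : ℕ} (h : Pt n) : shF (shG h) = h := by simp [shF, shG]
theorem shG_shF {n : ℕ} (h : Pt n) : shG (shF h) = h := by simp [shF, shG]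

theorem mp_shE (n : ℕ) : MeasurePreserving (shE (n := n)) := by
  rw [Measure.volume_eq_prod]
  refine MeasurePreserving.skew_product (f := id) (g := fun a c => ‖a‖^2 - c) (MeasurePreserving.id _) ?_ ?_
  · simp only [Function.uncurry_def]; fun_prop
  · exact Filter.Eventually.of_forall fun a => (Measure.measurePreserving_sub_left volume (‖a‖^2)).map_eq

theorem mp_shF (n : ℕ) : MeasurePreserving (shF (n := n)) := by
  rw [Measure.volume_eq_prod]
  refine MeasurePreserving.skew_product (f := id) (g := fun a c => c - ‖a‖^2) (MeasurePreserving.id _) ?_ ?_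
  · simp only [Function.uncurry_def]; fun_prop
  · exact Filter.Eventually.of_forall fun a => (measurePreserving_sub_right volume (‖a‖^2)).map_eq

theorem mp_shG (n : ℕ) : MeasurePreserving (shG (n := n)) := by
  rw [Measure.volume_eq_prod]
  refine MeasurePreserving.skew_product (f := id) (g := fun a c => c + ‖a‖^2) (MeasurePreserving.id _) ?_ ?_
  · simp only [Function.uncurry_def]; fun_prop
  · exact Filter.Eventually.of_forall fun a => (measurePreserving_add_right volume (‖a‖^2)).map_eq

theorem incT_eq {n : ℕ} {E Es : Set (Pt n)} (mE : MeasurableSet E) (mEs : MeasurableSet Es) :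
    incT n E Es = JJ (shE ⁻¹' E) (shF ⁻¹' Es) := by
  have mF : MeasurableSet (shF ⁻¹' Es) := (mp_shF n).measurable mEs
  have key : ∀ h : Pt n, radonT n (Es.indicator 1) (shE h) = volume (sl (shF ⁻¹' Es) h) := by
    intro h
    unfold radonT
    rw [← lintegral_sub_left_eq_self _ h.1, ← lintegral_indicator_one (measurableSet_sl mF h)]
    refine lintegral_congr fun v => ?_
    have : ((shE h).1 - (h.1 - v), (shE h).2 - ‖h.1 - v‖^2) = shF (v, 2*⟪h.1, v⟫ - h.2) := by
      simp only [shE, shF, Prod.mk.injEq]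
      refine ⟨by abel, ?_⟩
      rw [norm_sub_sq_real]; ring
    rw [this]
    rfl
  have hm : Measurable (radonT n (Es.indicator 1)) := by
    have : radonT n (Es.indicator 1) = fun h => volume (sl (shF ⁻¹' Es) (shE h)) := by
      funext h; rw [← key, shE_shE]
    rw [this]
    exact (measurable_vol_sl mF).comp (mp_shE n).measurable
  unfold incT JJ
  rw [← (mp_shE n).setLIntegral_comp_preimage mE hm]
  simp_rw [key]

theorem fst_ball {n : ℕ} (b : OrthonormalBasis (Fin n) ℝ (Vec n)) (hb pb : Pt n) (r rs : Fin n → ℝ) (ρ : ℝ)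
    (h : pb.2 = 2*⟪hb.1, pb.1⟫ - hb.2) (hrs : ∀ j, 0 < rs j) :
    Prod.fst '' ballI n (shE hb, shF pb) b r rs ρ = shE ⁻¹' LB b hb.1 pb r ρ := by
  have key : ∀ x : Pt n, x.2 - (shF pb).2 - ‖x.1 - pb.1‖^2 = 2*⟪(shE x).1, pb.1⟫ - (shE x).2 - pb.2 := by
    intro x
    simp only [shF, shE]
    rw [norm_sub_sq_real]; ring
  ext x
  constructor
  · rintro ⟨⟨x, y⟩, ⟨h1, h2, h3, h4, h5⟩, rfl⟩
    refine ⟨fun j => ?_, ?_⟩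
    · rw [real_inner_comm]; exact h2 j
    · rw [← key]; exact h3
  · rintro ⟨h1, h2⟩
    refine ⟨(x, (pb.1, x.2 - ‖pb.1 - x.1‖^2)), ⟨rfl, fun j => ?_, ?_, fun j => ?_, ?_⟩, rfl⟩
    · rw [real_inner_comm]; exact h1 j
    · rw [← key] at h2; exact h2
    · simp [shF, hrs j]
    · convert h2 using 2
      rw [h]
      simp only [shE]
      rw [norm_sub_sq_real, norm_sub_sq_real, real_inner_comm x.1 pb.1, real_inner_comm hb.1 pb.1]
      ring

theorem snd_ball {n : ℕ} (b : OrthonormalBasis (Fin n) ℝ (Vec n)) (hb pb : Pt n) (r rs : Fin n → ℝ) (ρ : ℝ)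
    (h : pb.2 = 2*⟪hb.1, pb.1⟫ - hb.2) (hr : ∀ j, 0 < r j) :
    Prod.snd '' ballI n (shE hb, shF pb) b r rs ρ = shG ⁻¹' LB b pb.1 hb rs ρ := by
  have key : ∀ y : Pt n, y.2 - (shE hb).2 + ‖y.1 - hb.1‖^2 = -(2*⟪(shG y).1, hb.1⟫ - (shG y).2 - hb.2) := by
    intro x
    simp only [shG, shE]
    rw [norm_sub_sq_real]; ring
  ext y
  constructor
  · rintro ⟨⟨x, y⟩, ⟨h1, h2, h3, h4, h5⟩, rfl⟩
    refine ⟨fun j => ?_, ?_⟩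
    · rw [real_inner_comm]; exact h4 j
    · rw [← abs_neg, ← key]; exact h5
  · rintro ⟨h1, h2⟩
    refine ⟨((hb.1, y.2 + ‖y.1 - hb.1‖^2), y), ⟨?_, fun j => ?_, ?_, fun j => ?_, ?_⟩, rfl⟩
    · simp
    · simp [shE, hr j]
    · rw [← abs_neg] at h2
      convert h2 using 2
      simp only [shF, shG]
      rw [h, norm_sub_sq_real, norm_sub_sq_real, real_inner_comm hb.1 y.1]
      ring
    · rw [real_inner_comm]; exact h1 j
    · rw [← abs_neg, ← key] at h2; exact h2

theorem JJ_finite (k n : ℕ) (hkn : n = k+1) {E F : Set (Pt n)} (mE : MeasurableSet E) (mF : MeasurableSet F)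
    (hE : volume E < ⊤) (hF : volume F < ⊤) : JJ E F < ⊤ := by
  obtain ⟨C, N, hC, hN, H⟩ := linear_thm k
  rw [← hkn] at H
  by_contra hJ
  rw [not_lt, top_le_iff] at hJ
  let FR : ℕ → Set (Pt n) := fun R => F ∩ {p | p.1 ∈ Metric.ball (0:Vec n) R}
  have mFR : ∀ R, MeasurableSet (FR R) := fun R => mF.inter (measurable_fst measurableSet_ball)
  have hun : GG E F = ⋃ R, GG E (FR R) := by
    ext ⟨h, v⟩
    simp only [Set.mem_iUnion]
    constructor
    · rintro ⟨h1, h2⟩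
      obtain ⟨R, hR⟩ := exists_nat_gt ‖v‖
      exact ⟨R, h1, h2, by simpa using hR⟩
    · rintro ⟨R, h1, h2⟩
      exact ⟨h1, h2.1⟩
  have hmono : Monotone fun R => GG E (FR R) := by
    intro R R' hRR
    rintro ⟨h, v⟩ ⟨h1, h2⟩
    exact ⟨h1, h2.1, Metric.ball_subset_ball (by exact_mod_cast hRR) h2.2⟩
  rw [JJ_eq_vol mE mF, hun, hmono.measure_iUnion] at hJ
  set Q := max 1 (C*((volume E).toReal*(volume F).toReal)^(n+1)) with hQ
  have hlt : ENNReal.ofReal Q < ⨆ R, volume (GG E (FR R)) := by rw [hJ]; exact ENNReal.ofReal_lt_top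
  obtain ⟨R, hR⟩ := lt_iSup_iff.1 hlt
  rw [← JJ_eq_vol mE (mFR R)] at hR
  have hfin : JJ E (FR R) < ⊤ := by
    calc JJ E (FR R) ≤ ∫⁻ h in E, volume (Metric.ball (0:Vec n) R) := by
          apply lintegral_mono
          intro h
          exact measure_mono fun v hv => hv.2
      _ = volume (Metric.ball (0:Vec n) R) * volume E := by simp
      _ < ⊤ := ENNReal.mul_lt_top measure_ball_lt_top hE
  have hFR : volume (FR R) < ⊤ := (measure_mono Set.inter_subset_left).trans_lt hF
  set t := (JJ E (FR R)).toReal with ht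
  have htJ : JJ E (FR R) = ENNReal.ofReal t := (ENNReal.ofReal_toReal hfin.ne).symm
  rw [htJ, ENNReal.ofReal_lt_ofReal_iff_of_nonneg (by rw [hQ]; positivity)] at hR
  have t1 : 1 < t := (le_max_left _ _).trans_lt hR
  have t2 : C*((volume E).toReal*(volume F).toReal)^(n+1) < t := (le_max_right _ _).trans_lt hR
  have tp : 0 < JJ E (FR R) := by rw [htJ, ENNReal.ofReal_pos]; linarith
  have hEp : 0 < volume E := by
    rw [pos_iff_ne_zero]; intro h0
    unfold JJ at tp
    rw [Measure.restrict_eq_zero.2 h0, lintegral_zero_measure] at tp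
    exact lt_irrefl _ tp
  have hFp : 0 < volume (FR R) := by
    rw [pos_iff_ne_zero]; intro h0
    rw [JJ_symm mE (mFR R)] at tp
    unfold JJ at tp
    rw [Measure.restrict_eq_zero.2 h0, lintegral_zero_measure] at tp
    exact lt_irrefl _ tp
  have ep := ENNReal.toReal_pos hEp.ne' hE.ne
  have fp := ENNReal.toReal_pos hFp.ne' hFR.ne
  set e := (volume E).toReal
  set f := (volume (FR R)).toReal
  have hff : f ≤ (volume F).toReal := ENNReal.toReal_mono hF.ne (measure_mono Set.inter_subset_left)
  have := (H E (FR R) e f t (t^(n+2)/(e*f)^(n+1)) mE (mFR R) ep fp (by linarith) (by positivity)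
    (ENNReal.ofReal_toReal hE.ne).symm (ENNReal.ofReal_toReal hFR.ne).symm htJ (by
      apply le_of_eq; field_simp)).1
  rw [div_le_iff₀ (by positivity)] at this
  have h5 : (e*f)^(n+1) ≤ (e*(volume F).toReal)^(n+1) := by gcongr
  have h6 : t ≤ t^(n+2) := le_self_pow₀ t1.le (by omega)
  have h7 : C*(e*f)^(n+1) ≤ C*(e*(volume F).toReal)^(n+1) := by gcongr
  linarith

theorem main_thm (k : ℕ) :
    ∃ C A : ℝ, 0 < C ∧ 0 < A ∧
      ∀ (ε : ℝ), 0 < ε →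
      ∀ (E Es : Set (Pt (k+1))), MeasurableSet E → MeasurableSet Es →
        0 < volume E → volume E < ⊤ → 0 < volume Es → volume Es < ⊤ →
        ENNReal.ofReal ε * (volume E ^ (((k+2 : ℕ) : ℝ) / ((k+2 : ℕ) + 1)) *
            volume Es ^ (((k+2 : ℕ) : ℝ) / ((k+2 : ℕ) + 1))) ≤ incT (k+1) E Es →
        ∃ (zb : Pt (k+1) × Pt (k+1)) (e : Fin (k+1) → Vec (k+1))
          (r rs : Fin (k+1) → ℝ) (ρ : ℝ),
          IsBallParams (k+1) zb e r rs ρ ∧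
          ENNReal.ofReal (C⁻¹ * ε ^ A) * incT (k+1) E Es ≤
            incT (k+1) (E ∩ Prod.fst '' ballI (k+1) zb e r rs ρ)
              (Es ∩ Prod.snd '' ballI (k+1) zb e r rs ρ) ∧
          volume (Prod.fst '' ballI (k+1) zb e r rs ρ) ≤ volume E ∧
          volume (Prod.snd '' ballI (k+1) zb e r rs ρ) ≤ volume Es := by
  obtain ⟨C, N, hC, hN, H⟩ := linear_thm k
  refine ⟨C, (((k+3)*N : ℕ) : ℝ), by linarith, by exact_mod_cast Nat.mul_pos (by omega) hN, ?_⟩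
  intro ε hε E Es mE mEs hE0 hE hEs0 hEs hq
  have mE' : MeasurableSet (shE ⁻¹' E) := (mp_shE _).measurable mE
  have mF' : MeasurableSet (shF ⁻¹' Es) := (mp_shF _).measurable mEs
  have vE : volume (shE ⁻¹' E) = volume E := (mp_shE _).measure_preimage mE.nullMeasurableSet
  have vF : volume (shF ⁻¹' Es) = volume Es := (mp_shF _).measure_preimage mEs.nullMeasurableSet
  have hfin : JJ (shE ⁻¹' E) (shF ⁻¹' Es) < ⊤ := JJ_finite k _ rfl mE' mF' (by rwa [vE]) (by rwa [vF])
  rw [incT_eq mE mEs] at hq ⊢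
  have ep := ENNReal.toReal_pos hE0.ne' hE.ne
  have fp := ENNReal.toReal_pos hEs0.ne' hEs.ne
  set e := (volume E).toReal
  set f := (volume Es).toReal
  have hEe : volume E = ENNReal.ofReal e := (ENNReal.ofReal_toReal hE.ne).symm
  have hFf : volume Es = ENNReal.ofReal f := (ENNReal.ofReal_toReal hEs.ne).symm
  set t := (JJ (shE ⁻¹' E) (shF ⁻¹' Es)).toReal with ht
  have htJ : JJ (shE ⁻¹' E) (shF ⁻¹' Es) = ENNReal.ofReal t := (ENNReal.ofReal_toReal hfin.ne).symm
  set p : ℝ := ((k+2 : ℕ) : ℝ) / ((k+2 : ℕ) + 1) with hp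
  have hreal : ε*(e^p*f^p) ≤ t := by
    rw [hEe, hFf, htJ, ENNReal.ofReal_rpow_of_pos ep, ENNReal.ofReal_rpow_of_pos fp, ← ENNReal.ofReal_mul (by positivity),
      ← ENNReal.ofReal_mul hε.le, ENNReal.ofReal_le_ofReal_iff ENNReal.toReal_nonneg] at hq
    exact hq
  have tp : 0 < t := lt_of_lt_of_le (by positivity) hreal
  have hpow : ε^(k+3)*(e*f)^(k+1+1) ≤ t^(k+1+2) := by
    have h1 : (ε*(e^p*f^p))^(k+3) ≤ t^(k+3) := by gcongr
    refine le_trans (le_of_eq ?_) h1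
    rw [← Real.mul_rpow ep.le fp.le, mul_pow ε, ← Real.rpow_natCast ((e*f)^p), ← Real.rpow_mul (by positivity)]
    have : p * ((k+3 : ℕ) : ℝ) = ((k+1+1 : ℕ) : ℝ) := by
      rw [hp]; push_cast
      have : (k:ℝ)+2+1 ≠ 0 := by positivity
      field_simp
      ring
    rw [this, Real.rpow_natCast]
  obtain ⟨-, b, hb, pb, r, rs, ρ, c1, c2, c3, c4, c5, c6, c7, c8⟩ := H (shE ⁻¹' E) (shF ⁻¹' Es) e f t (ε^(k+3)) mE' mF' ep fp tp (by positivity)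
    (vE.trans hEe) (vF.trans hFf) htJ hpow
  refine ⟨(shE hb, shF pb), b, r, rs, ρ, ⟨?_, c2, b.orthonormal, c3, c4, c5⟩, ?_, ?_, ?_⟩
  · simp only [shE, shF]
    rw [c1, norm_sub_sq_real, real_inner_comm]; ring
  · rw [fst_ball b hb pb r rs ρ c1 c4, snd_ball b hb pb r rs ρ c1 c3, incT_eq (mE.inter ((mp_shE _).measurable (measurableSet_LB ..)))
      (mEs.inter ((mp_shG _).measurable (measurableSet_LB ..)))]
    rw [Set.preimage_inter, Set.preimage_inter, ← Set.preimage_comp, ← Set.preimage_comp,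
      show shE ∘ shE = @id (Pt (k+1)) from funext shE_shE, show shG ∘ shF = @id (Pt (k+1)) from funext shG_shF, Set.preimage_id, Set.preimage_id]
    refine le_trans (le_of_eq ?_) c6
    rw [htJ, ← ENNReal.ofReal_mul (by positivity), Real.rpow_natCast, pow_mul]
  · rw [fst_ball b hb pb r rs ρ c1 c4, (mp_shE _).measure_preimage (measurableSet_LB ..).nullMeasurableSet]
    exact c7.trans vE.le
  · rw [snd_ball b hb pb r rs ρ c1 c3, (mp_shG _).measure_preimage (measurableSet_LB ..).nullMeasurableSet]
    exact c8.trans vF.le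

/-- main theorem: any `ε`-quasiextremal pair `(E, E*)` interacts
strongly with the pair `(B, B*) = (π(ℬ), π*(ℬ))` of projections of some ball `ℬ`,
with `|B| ≤ |E|` and `|B*| ≤ |E*|`. -/
theorem stmt3 (d : ℕ) (hd : 2 ≤ d) :
    ∃ C A : ℝ, 0 < C ∧ 0 < A ∧
      ∀ (ε : ℝ), 0 < ε →
      ∀ (E Es : Set (Pt (d - 1))), MeasurableSet E → MeasurableSet Es →
        0 < volume E → volume E < ⊤ → 0 < volume Es → volume Es < ⊤ →
        ENNReal.ofReal ε * (volume E ^ ((d : ℝ) / (d + 1)) *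
            volume Es ^ ((d : ℝ) / (d + 1))) ≤ incT (d - 1) E Es →
        ∃ (zb : Pt (d - 1) × Pt (d - 1)) (e : Fin (d - 1) → Vec (d - 1))
          (r rs : Fin (d - 1) → ℝ) (ρ : ℝ),
          IsBallParams (d - 1) zb e r rs ρ ∧
          ENNReal.ofReal (C⁻¹ * ε ^ A) * incT (d - 1) E Es ≤
            incT (d - 1) (E ∩ Prod.fst '' ballI (d - 1) zb e r rs ρ)
              (Es ∩ Prod.snd '' ballI (d - 1) zb e r rs ρ) ∧
          volume (Prod.fst '' ballI (d - 1) zb e r rs ρ) ≤ volume E ∧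
          volume (Prod.snd '' ballI (d - 1) zb e r rs ρ) ≤ volume Es := by
  obtain ⟨k, rfl⟩ : ∃ k, d = k + 2 := ⟨d - 2, by omega⟩
  exact main_thm k
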